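/- arXiv:2107.02231 — 3 statements merged into one kernel-verified Lean document; each statement's English description precedes it below -/
import Mathlib

section
/- Let X be an ACM set of distinct points in P^m × P^n with s_1 = |X_1| and s_2 = |X_2|. If s_1 = 1 then HF_{ϑ_X}(i,j) = HF_{ϑ_{X_2}}(j) for all (i,j) ∈ N^2; and if s_2 = 1 then HF_{ϑ_X}(i,j) = HF_{ϑ_{X_1}}(i) for all (i,j) ∈ N^2. -/
/- Common setup: finite sets of points in the multiprojective space
   `P^m x P^n` over a field `K` of characteristic zero, their bihomogeneous
   vanishing ideals, bigraded Hilbert functions, Kähler differents,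
   separators, Cayley-Bacharach property and complete intersections. -/

open MvPolynomial

set_option maxHeartbeats 1000000
set_option synthInstance.maxHeartbeats 400000

noncomputable section

namespace MultiProjPoints

variable (K : Type) [Field K] [CharZero K] [DecidableEq K]

/-- The bigraded coordinate ring `S = K[X_0,…,X_m,Y_0,…,Y_n]` of `P^m × P^n`. -/
abbrev BiRing (m n : ℕ) : Type := MvPolynomial (Fin (m+1) ⊕ Fin (n+1)) K

/-- The weights giving the bigrading: `deg X_i = (1,0)`, `deg Y_j = (0,1)`. -/
def biwt (m n : ℕ) : (Fin (m+1) ⊕ Fin (n+1)) → ℤ × ℤ :=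
  Sum.elim (fun _ => ((1 : ℤ), (0 : ℤ))) (fun _ => ((0 : ℤ), (1 : ℤ)))

variable {m n : ℕ}

/-- A (representative of a) point of `P^m × P^n`. -/
abbrev BiPt (m n : ℕ) : Type := (Fin (m+1) → K) × (Fin (n+1) → K)

/-- `F` is bihomogeneous of degree `d`. -/
def IsBihom (F : BiRing K m n) (d : ℤ × ℤ) : Prop :=
  IsWeightedHomogeneous (biwt m n) F d

/-- Evaluation of a polynomial at (a representative of) a point. -/
def evalB (p : BiPt K m n) (F : BiRing K m n) : K :=
  eval (Sum.elim p.1 p.2) F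

/-- A finset of representatives is a good configuration of points of
`P^m × P^n`: all representatives are nonzero, and proportional
representatives coincide (so distinct elements are distinct projective
points, and images under the two projections behave correctly). -/
def GoodConfig (𝕏 : Finset (BiPt K m n)) : Prop :=
  (∀ p ∈ 𝕏, p.1 ≠ 0 ∧ p.2 ≠ 0) ∧
  (∀ p ∈ 𝕏, ∀ q ∈ 𝕏, (∃ c : K, c ≠ 0 ∧ p.1 = c • q.1) → p.1 = q.1) ∧
  (∀ p ∈ 𝕏, ∀ q ∈ 𝕏, (∃ c : K, c ≠ 0 ∧ p.2 = c • q.2) → p.2 = q.2)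

/-- The bihomogeneous vanishing ideal `I_𝕏` of a set of points. -/
def vIdealB (𝕏 : Finset (BiPt K m n)) : Ideal (BiRing K m n) :=
  Ideal.span {F | (∃ d, IsBihom K F d) ∧ ∀ p ∈ 𝕏, evalB K p F = 0}

/-- The bihomogeneous vanishing ideal of a single point. -/
def ptIdealB (p : BiPt K m n) : Ideal (BiRing K m n) :=
  Ideal.span {F | (∃ d, IsBihom K F d) ∧ evalB K p F = 0}

/-- The degree-`d` piece of `S/I`. -/
def degPieceB (I : Ideal (BiRing K m n)) (d : ℤ × ℤ) :
    Submodule K (BiRing K m n ⧸ I) :=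
  (weightedHomogeneousSubmodule K (biwt m n) d).map
    (Ideal.Quotient.mkₐ K I).toLinearMap

/-- The Hilbert function of `S/I`. -/
def HFI (I : Ideal (BiRing K m n)) (d : ℤ × ℤ) : ℕ :=
  Module.finrank K (degPieceB K I d)

/-- The Hilbert function of a set of points in `P^m × P^n`. -/
def HFB (𝕏 : Finset (BiPt K m n)) (d : ℤ × ℤ) : ℕ :=
  HFI K (vIdealB K 𝕏) d

/-- The Hilbert function of a (bihomogeneous) ideal `J` of `R_𝕏 = S/I`. -/
def HFIdealB (I : Ideal (BiRing K m n)) (J : Ideal (BiRing K m n ⧸ I))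
    (d : ℤ × ℤ) : ℕ :=
  Module.finrank K ↥((Submodule.restrictScalars K J) ⊓ degPieceB K I d)

/- ### Single projective space `P^N` -/

/-- The coordinate ring `K[X_0,…,X_N]` of `P^N`. -/
abbrev PRing (N : ℕ) : Type := MvPolynomial (Fin (N+1)) K

/-- The standard grading on `K[X_0,…,X_N]` (with values in `ℤ`). -/
def wt1 (N : ℕ) : Fin (N+1) → ℤ := fun _ => 1

/-- `F` is homogeneous of degree `d`. -/
def IsHom1 {N : ℕ} (F : PRing K N) (d : ℤ) : Prop :=
  IsWeightedHomogeneous (wt1 N) F d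

/-- A good finite set of representatives of points in `P^N`. -/
def GoodSet {N : ℕ} (Y : Finset (Fin (N+1) → K)) : Prop :=
  (∀ q ∈ Y, q ≠ 0) ∧
  (∀ p ∈ Y, ∀ q ∈ Y, (∃ c : K, c ≠ 0 ∧ p = c • q) → p = q)

/-- The homogeneous vanishing ideal of a set of points in `P^N`. -/
def vIdeal1 {N : ℕ} (Y : Finset (Fin (N+1) → K)) : Ideal (PRing K N) :=
  Ideal.span {F | (∃ d, IsHom1 K F d) ∧ ∀ q ∈ Y, eval q F = 0}

/-- The degree-`d` piece of `K[X_0,…,X_N]/I`. -/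
def degPiece1 {N : ℕ} (I : Ideal (PRing K N)) (d : ℤ) :
    Submodule K (PRing K N ⧸ I) :=
  (weightedHomogeneousSubmodule K (wt1 N) d).map
    (Ideal.Quotient.mkₐ K I).toLinearMap

/-- The Hilbert function of a set of points in `P^N`. -/
def HF1 {N : ℕ} (Y : Finset (Fin (N+1) → K)) (d : ℤ) : ℕ :=
  Module.finrank K (degPiece1 K (vIdeal1 K Y) d)

/-- The Hilbert function of a homogeneous ideal of `K[X_0,…,X_N]/I`. -/
def HFIdeal1 {N : ℕ} (I : Ideal (PRing K N)) (J : Ideal (PRing K N ⧸ I))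
    (d : ℤ) : ℕ :=
  Module.finrank K ↥((Submodule.restrictScalars K J) ⊓ degPiece1 K I d)

/-- The degree `deg_Y(q)` of a point `q` in `Y ⊆ P^N`: the minimal degree of
a homogeneous separator of `q` in `Y`. -/
def deg1 {N : ℕ} (Y : Finset (Fin (N+1) → K)) (q : Fin (N+1) → K) : ℕ :=
  sInf {d : ℕ | ∃ F : PRing K N, IsHom1 K F (d : ℤ) ∧ eval q F ≠ 0 ∧
    ∀ q' ∈ Y, q' ≠ q → eval q' F = 0}

/-- The regularity index of the Hilbert function of `Y ⊆ P^N`. -/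
def regIndex1 {N : ℕ} (Y : Finset (Fin (N+1) → K)) : ℕ :=
  sInf {r : ℕ | ∀ i : ℕ, r ≤ i → HF1 K Y (i : ℤ) = Y.card}

/-- `Y ⊆ P^N` is a Cayley-Bacharach scheme. -/
def IsCB1 {N : ℕ} (Y : Finset (Fin (N+1) → K)) : Prop :=
  ∀ q ∈ Y, deg1 K Y q = regIndex1 K Y

/- ### Kähler differents -/

/-- The variables `X_1,…,X_m,Y_1,…,Y_n` indexed by `Fin (m+n)`. -/
def bvar (m n : ℕ) (v : Fin (m+n)) : Fin (m+1) ⊕ Fin (n+1) :=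
  if h : (v : ℕ) < m then Sum.inl ⟨(v : ℕ) + 1, by omega⟩
  else Sum.inr ⟨(v : ℕ) - m + 1, by have hv := v.isLt; omega⟩

/-- The Kähler different of `R = S/I` w.r.t. a system of generators `F` of
`I`: the ideal generated by the `(m+n)×(m+n)`-minors of the Jacobian matrix
`(∂F_k/∂X_i, ∂F_k/∂Y_j)`. -/
def kdiffB (I : Ideal (BiRing K m n)) {r : ℕ} (F : Fin r → BiRing K m n) :
    Ideal (BiRing K m n ⧸ I) :=
  Ideal.span (Set.range fun ρ : Fin (m+n) → Fin r =>
    Ideal.Quotient.mk I (Matrix.det (Matrix.of fun u v : Fin (m+n) =>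
      pderiv (bvar m n v) (F (ρ u)))))

/-- The Kähler different of `K[X_0,…,X_N]/I` w.r.t. a system of generators
`F` of `I` (minors w.r.t. the variables `X_1,…,X_N`). -/
def kdiff1 {N : ℕ} (I : Ideal (PRing K N)) {r : ℕ} (F : Fin r → PRing K N) :
    Ideal (PRing K N ⧸ I) :=
  Ideal.span (Set.range fun ρ : Fin N → Fin r =>
    Ideal.Quotient.mk I (Matrix.det (Matrix.of fun u v : Fin N =>
      pderiv (Fin.succ v) (F (ρ u)))))

/-- The extension `ϑ_{𝕏₁} R_𝕏` to `R_𝕏 = S/I` of the Kähler different of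
`𝕏₁ ⊆ P^m` computed from a system of generators `F` of `I_{𝕏₁}`. -/
def kdiffExtL (I : Ideal (BiRing K m n)) {r : ℕ} (F : Fin r → PRing K m) :
    Ideal (BiRing K m n ⧸ I) :=
  Ideal.span (Set.range fun ρ : Fin m → Fin r =>
    Ideal.Quotient.mk I (rename Sum.inl (Matrix.det (Matrix.of fun u v : Fin m =>
      pderiv (Fin.succ v) (F (ρ u))))))

/-- The extension `ϑ_{𝕏₂} R_𝕏` to `R_𝕏 = S/I` of the Kähler different of
`𝕏₂ ⊆ P^n` computed from a system of generators `G` of `I_{𝕏₂}`. -/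
def kdiffExtR (I : Ideal (BiRing K m n)) {r : ℕ} (G : Fin r → PRing K n) :
    Ideal (BiRing K m n ⧸ I) :=
  Ideal.span (Set.range fun ρ : Fin n → Fin r =>
    Ideal.Quotient.mk I (rename Sum.inr (Matrix.det (Matrix.of fun u v : Fin n =>
      pderiv (Fin.succ v) (G (ρ u))))))

/- ### Regular sequences, ACM, complete intersections -/

/-- `a, b` form a regular sequence. -/
def RegPair {A : Type*} [CommRing A] (a b : A) : Prop :=
  (∀ z : A, a * z = 0 → z = 0) ∧
  (∀ z : A, b * z ∈ Ideal.span {a} → z ∈ Ideal.span {a})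

/-- The image `x₀` of `X_0` in `S/I`. -/
def x0B (I : Ideal (BiRing K m n)) : BiRing K m n ⧸ I :=
  Ideal.Quotient.mk I (MvPolynomial.X (Sum.inl 0))

/-- The image `y₀` of `Y_0` in `S/I`. -/
def y0B (I : Ideal (BiRing K m n)) : BiRing K m n ⧸ I :=
  Ideal.Quotient.mk I (MvPolynomial.X (Sum.inr 0))

/-- The standing assumption for ACM sets of points: (after a change of
coordinates) `x₀, y₀` form a regular sequence in `R_𝕏`. -/
def ACMxy (𝕏 : Finset (BiPt K m n)) : Prop :=
  RegPair (x0B K (vIdealB K 𝕏)) (y0B K (vIdealB K 𝕏))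

/-- `𝕏` is arithmetically Cohen-Macaulay: some bihomogeneous linear forms
`ℓ` of degree `(1,0)` and `ℓ'` of degree `(0,1)` give a regular sequence in
`R_𝕏` (for points this is equivalent to `depth R_𝕏 = 2`). -/
def IsACM (𝕏 : Finset (BiPt K m n)) : Prop :=
  ∃ l l' : BiRing K m n, IsBihom K l (1, 0) ∧ IsBihom K l' (0, 1) ∧
    RegPair (Ideal.Quotient.mk (vIdealB K 𝕏) l) (Ideal.Quotient.mk (vIdealB K 𝕏) l')

/-- A regular sequence in a commutative ring, given as a list:
each entry is a non-zerodivisor modulo the preceding ones, and the list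
generates a proper ideal. -/
def IsRegSeq {A : Type*} [CommRing A] (l : List A) : Prop :=
  (∀ (i : ℕ) (h : i < l.length), ∀ z : A,
      l.get ⟨i, h⟩ * z ∈ Ideal.span {x | x ∈ l.take i} →
      z ∈ Ideal.span {x | x ∈ l.take i}) ∧
  Ideal.span {x | x ∈ l} ≠ ⊤

/-- `𝕏` is a complete intersection of type `(d_1,…,d_m,d'_1,…,d'_n)`. -/
def IsCIB (𝕏 : Finset (BiPt K m n)) (d : Fin m → ℕ) (d' : Fin n → ℕ) : Prop :=
  ∃ (F : Fin m → BiRing K m n) (G : Fin n → BiRing K m n),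
    (∀ i, IsBihom K (F i) ((d i : ℤ), 0)) ∧
    (∀ j, IsBihom K (G j) (0, (d' j : ℤ))) ∧
    IsRegSeq (List.ofFn F ++ List.ofFn G) ∧
    Ideal.span (Set.range F ∪ Set.range G) = vIdealB K 𝕏

/-- `Y ⊆ P^N` is a complete intersection of type `(d_1,…,d_N)`. -/
def IsCI1 {N : ℕ} (Y : Finset (Fin (N+1) → K)) (d : Fin N → ℕ) : Prop :=
  ∃ F : Fin N → PRing K N,
    (∀ i, IsHom1 K (F i) (d i : ℤ)) ∧
    IsRegSeq (List.ofFn F) ∧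
    Ideal.span (Set.range F) = vIdeal1 K Y

/- ### Separators and the Cayley-Bacharach property -/

/-- `F` is a separator of `p` in `𝕏`. -/
def IsSepB (𝕏 : Finset (BiPt K m n)) (p : BiPt K m n) (F : BiRing K m n) : Prop :=
  evalB K p F ≠ 0 ∧ ∀ q ∈ 𝕏, q ≠ p → evalB K q F = 0

/-- The set of degrees of bihomogeneous separators of `p` in `𝕏`. -/
def sepDegsB (𝕏 : Finset (BiPt K m n)) (p : BiPt K m n) : Set (ℤ × ℤ) :=
  {d | ∃ F, IsBihom K F d ∧ IsSepB K 𝕏 p F}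

/-- `deg_𝕏(p)`: the set of degrees of minimal separators of `p` in `𝕏`
(mimimality w.r.t. the componentwise order). -/
def minSepDegsB (𝕏 : Finset (BiPt K m n)) (p : BiPt K m n) : Set (ℤ × ℤ) :=
  {d ∈ sepDegsB K 𝕏 p | ∀ d' ∈ sepDegsB K 𝕏 p, ¬ d' < d}

/-- `𝕏` has the Cayley-Bacharach property: the Hilbert function of
`𝕏 \ {p}` is independent of the choice of `p ∈ 𝕏`. -/
def HasCB (𝕏 : Finset (BiPt K m n)) : Prop :=
  ∀ p ∈ 𝕏, ∀ q ∈ 𝕏, ∀ d : ℤ × ℤ, HFB K (𝕏.erase p) d = HFB K (𝕏.erase q) d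

/- ### Star property and fibres -/

/-- The `(⋆)`-property. -/
def StarProp (𝕏 : Finset (BiPt K m n)) : Prop :=
  ∀ p ∈ 𝕏, ∀ q ∈ 𝕏, ((p.1, q.2) ∈ 𝕏 ∨ (q.1, p.2) ∈ 𝕏)

/-- `V_j = π₁(π₂⁻¹(q'_j) ∩ 𝕏)` for `q'_j = p.2`. -/
def Vset (𝕏 : Finset (BiPt K m n)) (p : BiPt K m n) : Finset (Fin (m+1) → K) :=
  (𝕏.filter fun q => q.2 = p.2).image Prod.fst

/-- `W_i = π₂(π₁⁻¹(q_i) ∩ 𝕏)` for `q_i = p.1`. -/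
def Wset (𝕏 : Finset (BiPt K m n)) (p : BiPt K m n) : Finset (Fin (n+1) → K) :=
  (𝕏.filter fun q => q.1 = p.1).image Prod.snd

end MultiProjPoints

/-! If all points of `𝕏` have the same first projection `c`, normalized by `c₀ = 1`, then
`𝕏 = {c} × 𝕏₂`, and `I_𝕏` is generated by the linear forms `X_i - c_i X_0` and by `I_{𝕏₂}`. Hence
`R_𝕏 = R_{𝕏₂}[x₀]`, and the Jacobian matrix of these generators is block diagonal with an identity
block for the variables `X_i`, so that `ϑ_𝕏 = ϑ_{𝕏₂} R_𝕏`, whose piece of degree `(i, j)` is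
`x₀ⁱ (ϑ_{𝕏₂})_j`. That `c₀ ≠ 0` follows from the regularity of `x₀, y₀`. The case `s₂ = 1` is the
same with the two blocks of variables interchanged, which is why the surviving block is an arbitrary
injection `b : τ → V` into the set `V` of all variables. -/

namespace MultiProjPoints

section WeightedHomogeneous

variable {R σ τ M N : Type*} [CommSemiring R] [AddCommMonoid M] [AddCommMonoid N]
  {w : σ → M} {F : MvPolynomial σ R} {d : M}

lemma weight_addMonoidHom_comp (φ : M →+ N) (w : σ → M) (u : σ →₀ ℕ) :
    Finsupp.weight (φ ∘ w) u = φ (Finsupp.weight w u) := by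
  simp [Finsupp.weight_apply, Finsupp.sum, map_sum]

lemma isWeightedHomogeneous_addMonoidHom_comp (φ : M →+ N) (hF : IsWeightedHomogeneous w F d) :
    IsWeightedHomogeneous (φ ∘ w) F (φ d) := fun u hu => by
  rw [weight_addMonoidHom_comp, hF hu]

lemma isWeightedHomogeneous_addMonoidHom_comp_iff {φ : M →+ N} (hφ : Function.Injective φ) :
    IsWeightedHomogeneous (φ ∘ w) F (φ d) ↔ IsWeightedHomogeneous w F d :=
  ⟨fun hF u hu => hφ <| by rw [← weight_addMonoidHom_comp, hF hu],
    isWeightedHomogeneous_addMonoidHom_comp φ⟩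

lemma exists_isWeightedHomogeneous_addMonoidHom_comp_iff {φ : M →+ N}
    (hφ : Function.Injective φ) :
    (∃ d, IsWeightedHomogeneous (φ ∘ w) F d) ↔ ∃ d, IsWeightedHomogeneous w F d := by
  refine ⟨fun ⟨d, hF⟩ => ?_, fun ⟨d, hF⟩ => ⟨φ d, isWeightedHomogeneous_addMonoidHom_comp φ hF⟩⟩
  by_cases h0 : F = 0
  · exact ⟨0, h0 ▸ isWeightedHomogeneous_zero R w 0⟩
  · obtain ⟨u, hu⟩ := ne_zero_iff.1 h0
    refine ⟨Finsupp.weight w u, (isWeightedHomogeneous_addMonoidHom_comp_iff hφ).1 ?_⟩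
    rwa [← weight_addMonoidHom_comp, hF hu]

lemma isWeightedHomogeneous_aeval {w' : τ → M} {g : σ → MvPolynomial τ R}
    (hg : ∀ v, IsWeightedHomogeneous w' (g v) (w v)) (hF : IsWeightedHomogeneous w F d) :
    IsWeightedHomogeneous w' (aeval g F) d := by
  induction hF using IsWeightedHomogeneous.induction_on with
  | zero => simpa only [map_zero] using isWeightedHomogeneous_zero R w' d
  | add p q _ _ hp hq => simpa only [map_add] using hp.add hq
  | monomial u r hu =>
    rw [aeval_monomial, algebraMap_eq, ← hu, Finsupp.weight_apply]
    exact (IsWeightedHomogeneous.prod _ _ _ fun v _ => (hg v).pow (u v)).C_mul r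

lemma aeval_pow_mul {A : Type*} [CommSemiring A] [Algebra R A] {w : σ → ℕ} {n : ℕ}
    (hF : IsWeightedHomogeneous w F n) (t : A) (g : σ → A) :
    aeval (fun v => t ^ w v * g v) F = t ^ n * aeval g F := by
  induction hF using IsWeightedHomogeneous.induction_on with
  | zero => simp only [map_zero, mul_zero]
  | add p q _ _ hp hq => simp only [map_add, hp, hq, mul_add]
  | monomial u r hu =>
    simp only [aeval_monomial, Finsupp.prod, mul_pow, Finset.prod_mul_distrib, ← pow_mul,
      Finset.prod_pow_eq_pow_sum, ← hu, Finsupp.weight_apply, Finsupp.sum, smul_eq_mul,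
      mul_comm (w _)]
    exact mul_left_comm _ _ _

end WeightedHomogeneous

section Determinants

variable {R : Type*} [CommRing R]

lemma det_mem_of_det_submatrix_castAdd_mem {n m : ℕ} {J : Ideal R}
    (A : Matrix (Fin (n + m)) (Fin (n + m)) R)
    (hA : ∀ f : Fin n → Fin (n + m), (A.submatrix f (Fin.castAdd m)).det ∈ J) : A.det ∈ J := by
  induction m with
  | zero => exact hA id
  | succ m ih =>
    rw [Matrix.det_succ_column (n := n + m) A (Fin.last (n + m))]
    refine J.sum_mem fun i _ => J.mul_mem_left _ (ih _ fun f => ?_)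
    simp only [Matrix.submatrix_submatrix, Fin.succAbove_last]
    exact hA (i.succAbove ∘ f)

lemma det_mem_of_det_submatrix_inr_mem {ι κ : Type*} [Fintype ι] [Fintype κ] [DecidableEq ι]
    [DecidableEq κ] {J : Ideal R} (A : Matrix (ι ⊕ κ) (ι ⊕ κ) R)
    (hA : ∀ f : κ → ι ⊕ κ, (A.submatrix f Sum.inr).det ∈ J) : A.det ∈ J := by
  let eκ := (Fintype.equivFin κ).symm
  let e : Fin (Fintype.card κ + Fintype.card ι) ≃ ι ⊕ κ :=
    finSumFinEquiv.symm.trans ((Equiv.sumComm _ _).trans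
      (Equiv.sumCongr (Fintype.equivFin ι).symm eκ))
  rw [← Matrix.det_submatrix_equiv_self e]
  refine det_mem_of_det_submatrix_castAdd_mem _ fun f => ?_
  convert hA (e ∘ f ∘ eκ.symm) using 1
  rw [← Matrix.det_submatrix_equiv_self eκ]
  congr 1
  ext u v
  simp [e, eκ]

lemma det_mem_span_det_of_rows_mem_span {ι : Type*} [Fintype ι] [DecidableEq ι]
    {s : Set (ι → R)} (A : Matrix ι ι R) (hA : ∀ u, A u ∈ Submodule.span R s) :
    A.det ∈ Ideal.span (Matrix.det '' {B : Matrix ι ι R | ∀ u, B u ∈ s}) := by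
  simp only [Submodule.mem_span_iff_exists_finset_subset] at hA
  choose a t hts _ ha using hA
  have hdet : A.det = Matrix.detRowAlternating fun u => ∑ b ∈ t u, a u b • b := by
    simp only [ha]; rfl
  rw [hdet, ← AlternatingMap.coe_multilinearMap, MultilinearMap.map_sum_finset]
  refine Ideal.sum_mem _ fun B hB => ?_
  rw [MultilinearMap.map_smul_univ]
  exact Ideal.mul_mem_left _ _ <| Ideal.subset_span
    ⟨B, fun u => hts u (Fintype.mem_piFinset.1 hB u), rfl⟩

end Determinants

section KahlerDifferent

variable {R S ι κ : Type*} [CommRing R] [CommRing S] [Algebra R S]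

/-- The Jacobian matrix of a family of functions with respect to a family of derivations. -/
def jacobianMatrix (D : κ → Derivation R S S) (f : ι → S) : Matrix ι κ S :=
  Matrix.of fun u v => D v (f u)

lemma mk_derivation_mem_span (D : κ → Derivation R S S) {s : Set S} {f : S}
    (hf : f ∈ Ideal.span s) :
    (fun v => Ideal.Quotient.mk (Ideal.span s) (D v f)) ∈ Submodule.span (S ⧸ Ideal.span s)
      ((fun g v => Ideal.Quotient.mk (Ideal.span s) (D v g)) '' s) := by
  set π := Ideal.Quotient.mk (Ideal.span s)
  induction hf using Submodule.span_induction with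
  | mem g hg => exact Submodule.subset_span ⟨g, hg, rfl⟩
  | zero => simpa only [map_zero] using! Submodule.zero_mem _
  | add f g _ _ hf hg => simpa only [map_add] using! Submodule.add_mem _ hf hg
  | smul a g hg ih =>
    have hπg : π g = 0 := Ideal.Quotient.eq_zero_iff_mem.2 hg
    have hrow : (fun v => π (D v (a • g))) = π a • fun v => π (D v g) := by
      funext v
      simp [hπg]
    exact hrow ▸ Submodule.smul_mem _ _ ih

variable [Fintype ι] [Fintype κ] [DecidableEq ι] [DecidableEq κ]

/-- The Kähler different of `S ⧸ I` with respect to a family of derivations of `S`: the ideal of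
the maximal minors of the Jacobian matrices of all families in `I`. Taking all of them, rather than
those of a system of generators, makes the definition visibly independent of that choice; see
`kahlerDifferent_eq_span`. -/
def kahlerDifferent (D : ι → Derivation R S S) (I : Ideal S) : Ideal (S ⧸ I) :=
  Ideal.span ((fun f => Ideal.Quotient.mk I (jacobianMatrix D f).det) '' {f : ι → S | ∀ u, f u ∈ I})

lemma kahlerDifferent_eq_span (D : ι → Derivation R S S) {s : Set S} {I : Ideal S}
    (hs : Ideal.span s = I) :
    kahlerDifferent D I = Ideal.span
      ((fun f => Ideal.Quotient.mk I (jacobianMatrix D f).det) '' {f : ι → S | ∀ u, f u ∈ s}) := by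
  subst hs
  refine le_antisymm (Ideal.span_le.2 ?_) <| Ideal.span_mono <| Set.image_mono
    fun f hf u => Ideal.subset_span (hf u)
  rintro _ ⟨f, hf, rfl⟩
  dsimp only
  rw [RingHom.map_det]
  refine Ideal.span_mono ?_ <|
    det_mem_span_det_of_rows_mem_span _ fun u => mk_derivation_mem_span D (hf u)
  rintro _ ⟨B, hB, rfl⟩
  choose g hgs hgB using hB
  refine ⟨g, hgs, ?_⟩
  dsimp only
  rw [RingHom.map_det, ← show _ = B from funext hgB]
  rfl

lemma kahlerDifferent_eq_span_range (D : ι → Derivation R S S) {I : Ideal S} {α : Type*}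
    {H : α → S} (hH : Ideal.span (Set.range H) = I) :
    kahlerDifferent D I = Ideal.span (Set.range fun ρ : ι → α =>
      Ideal.Quotient.mk I (jacobianMatrix D (H ∘ ρ)).det) := by
  rw [kahlerDifferent_eq_span D hH]
  congr 1
  ext z
  constructor
  · rintro ⟨f, hf, rfl⟩
    choose ρ hρ using hf
    obtain rfl := funext hρ
    exact ⟨ρ, rfl⟩
  · rintro ⟨ρ, rfl⟩
    exact ⟨H ∘ ρ, fun u => ⟨ρ u, rfl⟩, rfl⟩

lemma kahlerDifferent_comp_equiv (e : κ ≃ ι) (D : ι → Derivation R S S) (I : Ideal S) :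
    kahlerDifferent (D ∘ e) I = kahlerDifferent D I := by
  refine le_antisymm (Ideal.span_le.2 ?_) (Ideal.span_le.2 ?_) <;> rintro _ ⟨f, hf, rfl⟩
  · refine Ideal.subset_span ⟨f ∘ e.symm, fun u => hf _, ?_⟩
    dsimp only
    rw [← Matrix.det_submatrix_equiv_self e]
    congr 2
    ext u v
    simp [jacobianMatrix]
  · refine Ideal.subset_span ⟨f ∘ e, fun u => hf _, ?_⟩
    dsimp only
    rw [← Matrix.det_submatrix_equiv_self e (jacobianMatrix D f)]
    rfl

lemma kahlerDifferent_le_comp_inr (D : ι ⊕ κ → Derivation R S S) (I : Ideal S) :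
    kahlerDifferent D I ≤ kahlerDifferent (D ∘ Sum.inr) I := by
  refine Ideal.span_le.2 ?_
  rintro _ ⟨f, hf, rfl⟩
  dsimp only
  rw [RingHom.map_det]
  refine det_mem_of_det_submatrix_inr_mem _ fun g => Ideal.subset_span ⟨f ∘ g, fun u => hf _, ?_⟩
  exact RingHom.map_det _ _

end KahlerDifferent

section HomogeneousIdeals

variable {R K σ M N : Type*} [CommRing R] [Field K] [AddCommMonoid M] [AddCommMonoid N]

/-- The ideal spanned by the polynomials that are weighted homogeneous for `w` and vanish on `P`;
for the standard weights of a (multi)projective space this is the vanishing ideal of the set of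
points with representatives in `P`. -/
def homogeneousVanishingIdeal (w : σ → M) (P : Set (σ → R)) : Ideal (MvPolynomial σ R) :=
  Ideal.span {F | (∃ d, IsWeightedHomogeneous w F d) ∧ ∀ p ∈ P, eval p F = 0}

lemma homogeneousVanishingIdeal_addMonoidHom_comp {φ : M →+ N} (hφ : Function.Injective φ)
    (w : σ → M) (P : Set (σ → R)) :
    homogeneousVanishingIdeal (φ ∘ w) P = homogeneousVanishingIdeal w P := by
  simp only [homogeneousVanishingIdeal, exists_isWeightedHomogeneous_addMonoidHom_comp_iff hφ]

lemma eval_pow_mul_eq_zero {w : σ → M} {P : Set (σ → R)} {F : MvPolynomial σ R}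
    (hF : F ∈ homogeneousVanishingIdeal w P) {p : σ → R} (hp : p ∈ P) (χ : M →+ ℕ) (t : R) :
    eval (fun v => t ^ χ (w v) * p v) F = 0 := by
  have hle : homogeneousVanishingIdeal w P ≤ RingHom.ker (eval fun v => t ^ χ (w v) * p v) := by
    refine Ideal.span_le.2 fun G ⟨⟨d, hG⟩, hGP⟩ => ?_
    have hscale := aeval_pow_mul (isWeightedHomogeneous_addMonoidHom_comp χ hG) t p
    rw [aeval_eq_eval, aeval_eq_eval, hGP p hp, mul_zero] at hscale
    exact hscale
  exact hle hF

/-- The piece of weighted degree `d` of the quotient of a polynomial ring by `I`. -/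
def degreePiece (w : σ → M) (I : Ideal (MvPolynomial σ K)) (d : M) :
    Submodule K (MvPolynomial σ K ⧸ I) :=
  (weightedHomogeneousSubmodule K w d).map (Ideal.Quotient.mkₐ K I).toLinearMap

/-- The Hilbert function of an ideal `A` of the quotient of a polynomial ring by `I`. It is the
junk value `0` in the degrees in which `A` is infinite-dimensional. -/
def idealHilbertFunction (w : σ → M) (I : Ideal (MvPolynomial σ K))
    (A : Ideal (MvPolynomial σ K ⧸ I)) (d : M) : ℕ :=
  Module.finrank K ↥(A.restrictScalars K ⊓ degreePiece w I d)

lemma mk_mem_degreePiece {w : σ → M} (I : Ideal (MvPolynomial σ K)) {d : M} {F : MvPolynomial σ K}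
    (hF : IsWeightedHomogeneous w F d) : Ideal.Quotient.mk I F ∈ degreePiece w I d :=
  ⟨F, hF, rfl⟩

lemma idealHilbertFunction_addMonoidHom_comp {φ : M →+ N} (hφ : Function.Injective φ)
    (w : σ → M) (I : Ideal (MvPolynomial σ K)) (A : Ideal (MvPolynomial σ K ⧸ I)) (d : M) :
    idealHilbertFunction (φ ∘ w) I A (φ d) = idealHilbertFunction w I A d := by
  have hw : weightedHomogeneousSubmodule K (φ ∘ w) (φ d) = weightedHomogeneousSubmodule K w d :=
    Submodule.ext fun _ => isWeightedHomogeneous_addMonoidHom_comp_iff hφ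
  rw [idealHilbertFunction, degreePiece, hw, idealHilbertFunction, degreePiece]

end HomogeneousIdeals

section Specialization

variable {R τ V : Type*} [CommRing R] {b : τ → V} {c : V → R} {o : V}
  {F : MvPolynomial V R} {G : MvPolynomial τ R} {i j : ℕ}

/-- The bigrading of `R[V]` for which the variables in the range of `b` have degree `(0, 1)` and
the other ones have degree `(1, 0)`. -/
def biweight (b : τ → V) : V → ℕ × ℕ :=
  Function.extend b (fun _ => (0, 1)) fun _ => (1, 0)

lemma biweight_apply (hb : Function.Injective b) (t : τ) : biweight b (b t) = (0, 1) :=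
  hb.extend_apply _ _ t

lemma biweight_of_notMem_range {v : V} (hv : v ∉ Set.range b) : biweight b v = (1, 0) :=
  Function.extend_apply' _ _ v hv

/-- The specialization `R[V] → R[τ]` of the variables outside the range of `b` to the values of
`c`. The values of `c` on the range of `b` are irrelevant. -/
def specialize (b : τ → V) (c : V → R) : MvPolynomial V R →ₐ[R] MvPolynomial τ R :=
  aeval (Function.extend b X (C ∘ c))

lemma specialize_rename (hb : Function.Injective b) (c : V → R) (G : MvPolynomial τ R) :
    specialize b c (rename b G) = G := by
  rw [specialize, aeval_rename, Function.extend_comp hb, aeval_X_left_apply]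

lemma specialize_X_of_notMem_range (c : V → R) {v : V} (hv : v ∉ Set.range b) :
    specialize b c (X v) = C (c v) := by
  rw [specialize, aeval_X, Function.extend_apply' _ _ v hv, Function.comp_apply]

lemma isWeightedHomogeneous_specialize (hb : Function.Injective b) (c : V → R)
    (hF : IsWeightedHomogeneous (biweight b) F (i, j)) :
    IsWeightedHomogeneous (1 : τ → ℕ) (specialize b c F) j := by
  refine isWeightedHomogeneous_aeval (fun v => ?_)
    (isWeightedHomogeneous_addMonoidHom_comp (AddMonoidHom.snd ℕ ℕ) hF)
  by_cases hv : v ∈ Set.range b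
  · obtain ⟨t, rfl⟩ := hv
    simpa only [Function.comp_apply, biweight_apply hb, hb.extend_apply] using!
      isWeightedHomogeneous_X R 1 t
  · simpa only [Function.comp_apply, biweight_of_notMem_range hv,
      Function.extend_apply' _ _ v hv] using! isWeightedHomogeneous_C 1 (c v)

lemma isWeightedHomogeneous_rename (hb : Function.Injective b)
    (hG : IsWeightedHomogeneous (1 : τ → ℕ) G j) :
    IsWeightedHomogeneous (biweight b) (rename b G) (0, j) := by
  rw [rename_eq_aeval]
  refine isWeightedHomogeneous_aeval (fun t => ?_)
    (isWeightedHomogeneous_addMonoidHom_comp (AddMonoidHom.inr ℕ ℕ) hG)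
  simpa only [biweight_apply hb] using! isWeightedHomogeneous_X R (biweight b) (b t)

lemma eval_eq_pow_mul_eval_specialize (hb : Function.Injective b) {p : V → R}
    (hp : ∀ v ∉ Set.range b, p v = c v * p o)
    (hF : IsWeightedHomogeneous (biweight b) F (i, j)) :
    eval p F = p o ^ i * eval (p ∘ b) (specialize b c F) := by
  have hF₁ := isWeightedHomogeneous_addMonoidHom_comp (AddMonoidHom.fst ℕ ℕ) hF
  have hpq : p = fun v => p o ^ (AddMonoidHom.fst ℕ ℕ ∘ biweight b) v *
      eval (p ∘ b) (Function.extend b X (C ∘ c) v) := by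
    funext v
    by_cases hv : v ∈ Set.range b
    · obtain ⟨t, rfl⟩ := hv
      simp [biweight_apply hb, hb.extend_apply]
    · simp [biweight_of_notMem_range hv, Function.extend_apply' _ _ v hv, hp v hv, mul_comm]
  calc eval p F = aeval p F := by rw [aeval_eq_eval]
    _ = p o ^ i * aeval (fun v => eval (p ∘ b) (Function.extend b X (C ∘ c) v)) F := by
      conv_lhs => rw [hpq]
      exact aeval_pow_mul hF₁ _ _
    _ = p o ^ i * eval (p ∘ b) (specialize b c F) := by
      rw [specialize, ← aeval_eq_eval, ← comp_aeval_apply]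

/-- The ideal of the point `c`, with homogeneous coordinates indexed by the complement of the range
of `b` and normalized by `c o = 1`, in the product of its ambient projective space with the
projective space with coordinates indexed by `τ`. -/
def pointIdeal (b : τ → V) (c : V → R) (o : V) : Ideal (MvPolynomial V R) :=
  Ideal.span ((fun v => X v - C (c v) * X o) '' (Set.range b)ᶜ)

lemma pointIdeal_le_ker_specialize (ho : o ∉ Set.range b) (hc : c o = 1) :
    pointIdeal b c o ≤ RingHom.ker (specialize b c) := by
  refine Ideal.span_le.2 ?_
  rintro _ ⟨v, hv, rfl⟩
  simp [specialize_X_of_notMem_range c hv, specialize_X_of_notMem_range c ho, hc]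

lemma sub_pow_mul_rename_specialize_mem_pointIdeal (hb : Function.Injective b) (c : V → R) (o : V)
    (hF : IsWeightedHomogeneous (biweight b) F (i, j)) :
    F - X o ^ i * rename b (specialize b c F) ∈ pointIdeal b c o := by
  have hF₁ := isWeightedHomogeneous_addMonoidHom_comp (AddMonoidHom.fst ℕ ℕ) hF
  let π := Ideal.Quotient.mkₐ R (pointIdeal b c o)
  have hπ : π.comp (aeval fun v => X o ^ (AddMonoidHom.fst ℕ ℕ ∘ biweight b) v *
      rename b (Function.extend b X (C ∘ c) v)) = π := by
    refine algHom_ext fun v => ?_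
    rw [AlgHom.comp_apply, aeval_X]
    by_cases hv : v ∈ Set.range b
    · obtain ⟨t, rfl⟩ := hv
      simp [biweight_apply hb, hb.extend_apply]
    · refine (Ideal.Quotient.eq.2 <| Ideal.subset_span ⟨v, hv, ?_⟩ :
        π (X v) = π _).symm
      simp [biweight_of_notMem_range hv, Function.extend_apply' _ _ v hv, mul_comm]
  have hspec : aeval (fun v => rename b (Function.extend b X (C ∘ c) v)) F =
      rename b (specialize b c F) := (comp_aeval_apply _ _ _).symm
  refine Ideal.Quotient.eq.1 ?_
  calc π F = π (aeval _ F) := (DFunLike.congr_fun hπ F).symm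
    _ = π (X o ^ i * rename b (specialize b c F)) := by
      rw [aeval_pow_mul hF₁, hspec]; rfl

end Specialization

section PointProduct

variable {R τ V : Type*} [CommRing R] {b : τ → V} {c : V → R} {o : V}
  {J : Ideal (MvPolynomial τ R)}

/-- The ideal of `{c} × Y`, where `c` is a point as in `pointIdeal` and `J` is the ideal of `Y`. -/
def pointProdIdeal (b : τ → V) (c : V → R) (o : V) (J : Ideal (MvPolynomial τ R)) :
    Ideal (MvPolynomial V R) :=
  pointIdeal b c o ⊔ J.map (rename b)

lemma homogeneousVanishingIdeal_eq_pointProdIdeal [IsDomain R] (hb : Function.Injective b)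
    (ho : o ∉ Set.range b) {P : Set (V → R)} (hPo : ∀ p ∈ P, p o ≠ 0)
    (hP : ∀ p ∈ P, ∀ v ∉ Set.range b, p v = c v * p o) :
    homogeneousVanishingIdeal (biweight b) P =
      pointProdIdeal b c o (homogeneousVanishingIdeal (1 : τ → ℕ) ((· ∘ b) '' P)) := by
  apply le_antisymm
  · refine Ideal.span_le.2 fun F ⟨⟨⟨i, j⟩, hF⟩, hFP⟩ => ?_
    have hspec : specialize b c F ∈ homogeneousVanishingIdeal (1 : τ → ℕ) ((· ∘ b) '' P) := by
      refine Ideal.subset_span ⟨⟨j, isWeightedHomogeneous_specialize hb c hF⟩, ?_⟩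
      rintro _ ⟨p, hp, rfl⟩
      have hFp := hFP p hp
      rw [eval_eq_pow_mul_eval_specialize hb (hP p hp) hF] at hFp
      exact (mul_eq_zero.1 hFp).resolve_left (pow_ne_zero i (hPo p hp))
    rw [← sub_add_cancel F (X o ^ i * rename b (specialize b c F))]
    exact Submodule.add_mem_sup (sub_pow_mul_rename_specialize_mem_pointIdeal hb c o hF)
      (Ideal.mul_mem_left _ _ (Ideal.mem_map_of_mem _ hspec))
  · refine sup_le (Ideal.span_le.2 ?_) (Ideal.map_le_iff_le_comap.2 (Ideal.span_le.2 ?_))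
    · rintro _ ⟨v, hv, rfl⟩
      refine Ideal.subset_span ⟨⟨(1, 0), Submodule.sub_mem (weightedHomogeneousSubmodule R _ _) ?_
        (IsWeightedHomogeneous.C_mul ?_ (c v))⟩, fun p hp => ?_⟩
      · exact biweight_of_notMem_range hv ▸ isWeightedHomogeneous_X R (biweight b) v
      · exact biweight_of_notMem_range ho ▸ isWeightedHomogeneous_X R (biweight b) o
      · simp [hP p hp v hv]
    · rintro G ⟨⟨j, hG⟩, hGP⟩
      refine Ideal.subset_span ⟨⟨(0, j), isWeightedHomogeneous_rename hb hG⟩, fun p hp => ?_⟩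
      rw [eval_rename]
      exact hGP _ ⟨p, hp, rfl⟩

/-- The homomorphism of coordinate rings `R[Y] → R[{c} × Y]` given by the projection to `Y`. -/
def pointProdPullback (b : τ → V) (c : V → R) (o : V) (J : Ideal (MvPolynomial τ R)) :
    MvPolynomial τ R ⧸ J →ₐ[R] MvPolynomial V R ⧸ pointProdIdeal b c o J :=
  Ideal.quotientMapₐ _ (rename b) (Ideal.map_le_iff_le_comap.1 le_sup_right)

lemma pointProdIdeal_le_comap_specialize (hb : Function.Injective b) (ho : o ∉ Set.range b)
    (hc : c o = 1) (J : Ideal (MvPolynomial τ R)) :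
    pointProdIdeal b c o J ≤ J.comap (specialize b c) := by
  refine sup_le ((pointIdeal_le_ker_specialize ho hc).trans (Ideal.comap_mono bot_le)) ?_
  refine Ideal.map_le_iff_le_comap.2 fun G hG => ?_
  rwa [Ideal.mem_comap, Ideal.mem_comap, specialize_rename hb]

/-- The retraction of `pointProdPullback` given by the specialization of the coordinates of the
point, that is, by dehomogenizing with respect to `o`. -/
def pointProdRetraction (hb : Function.Injective b) (ho : o ∉ Set.range b) (hc : c o = 1)
    (J : Ideal (MvPolynomial τ R)) :
    MvPolynomial V R ⧸ pointProdIdeal b c o J →ₐ[R] MvPolynomial τ R ⧸ J :=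
  Ideal.quotientMapₐ J (specialize b c) (pointProdIdeal_le_comap_specialize hb ho hc J)

lemma pointProdRetraction_pointProdPullback (hb : Function.Injective b) (ho : o ∉ Set.range b)
    (hc : c o = 1) (z : MvPolynomial τ R ⧸ J) :
    pointProdRetraction hb ho hc J (pointProdPullback b c o J z) = z := by
  obtain ⟨G, rfl⟩ := Ideal.Quotient.mk_surjective z
  exact congrArg _ (specialize_rename hb c G)

end PointProduct

section PointProductDifferent

variable {R τ V ι κ : Type*} [CommRing R] {b : τ → V} {o : V}

lemma pderiv_rename_of_notMem_range {v : V} (hv : v ∉ Set.range b) (G : MvPolynomial τ R) :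
    pderiv v (rename b G) = 0 := by
  classical
  refine pderiv_eq_zero_of_notMem_vars fun h => hv ?_
  obtain ⟨t, -, rfl⟩ := Finset.mem_image.1 (vars_rename b G h)
  exact ⟨t, rfl⟩

lemma span_union_eq_pointProdIdeal (b : τ → V) (c : V → R) (o : V)
    (J : Ideal (MvPolynomial τ R)) :
    Ideal.span ((fun v => X v - C (c v) * X o) '' (Set.range b)ᶜ ∪ rename b '' (J : Set _)) =
      pointProdIdeal b c o J := by
  rw [Ideal.span_union]; rfl

variable [Fintype ι] [Fintype κ] [DecidableEq ι] [DecidableEq κ]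

lemma kahlerDifferent_pointProdIdeal_le (hb : Function.Injective b) (ho : o ∉ Set.range b)
    (y : κ → τ) (c : V → R) (J : Ideal (MvPolynomial τ R)) :
    kahlerDifferent (fun v => pderiv (b (y v))) (pointProdIdeal b c o J) ≤
      (kahlerDifferent (fun v => pderiv (y v)) J).map (pointProdPullback b c o J) := by
  rw [kahlerDifferent_eq_span _ (span_union_eq_pointProdIdeal b c o J)]
  refine Ideal.span_le.2 ?_
  rintro _ ⟨f, hf, rfl⟩
  have hrow : ∀ u, ∃ g ∈ J, ∀ v, pderiv (b (y v)) (f u) = rename b (pderiv (y v) g) := fun u => by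
    rcases hf u with ⟨v, hv, hfv⟩ | ⟨g, hg, hfg⟩
    · refine ⟨0, J.zero_mem, fun t => ?_⟩
      have hvt : v ≠ b (y t) := fun h => hv ⟨_, h.symm⟩
      have hot : o ≠ b (y t) := fun h => ho ⟨_, h.symm⟩
      simp [← hfv, pderiv_X_of_ne hvt, pderiv_X_of_ne hot]
    · exact ⟨g, hg, fun t => by rw [← hfg, pderiv_rename hb]⟩
  choose g hgJ hfg using hrow
  have hjac : jacobianMatrix (fun v => pderiv (b (y v))) f =
      (rename b).mapMatrix (jacobianMatrix (fun v => pderiv (y v)) g) := Matrix.ext hfg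
  dsimp only
  rw [hjac, ← AlgHom.map_det]
  have hdet : Ideal.Quotient.mk J (jacobianMatrix (fun v => pderiv (y v)) g).det ∈
      kahlerDifferent (fun v => pderiv (y v)) J := Ideal.subset_span ⟨g, hgJ, rfl⟩
  exact Ideal.mem_map_of_mem (pointProdPullback b c o J) hdet

lemma le_kahlerDifferent_pointProdIdeal (hb : Function.Injective b) (ho : o ∉ Set.range b)
    {a : ι → V} (ha : Function.Injective a) (hab : ∀ u, a u ∉ Set.range b) (hao : ∀ u, a u ≠ o)
    (y : κ → τ) (c : V → R) (J : Ideal (MvPolynomial τ R)) :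
    (kahlerDifferent (fun v => pderiv (y v)) J).map (pointProdPullback b c o J) ≤
      kahlerDifferent (fun v => pderiv (Sum.elim a (b ∘ y) v)) (pointProdIdeal b c o J) := by
  refine Ideal.map_le_iff_le_comap.2 (Ideal.span_le.2 ?_)
  rintro _ ⟨f, hf, rfl⟩
  let ℓ (u : ι) : MvPolynomial V R := X (a u) - C (c (a u)) * X o
  have hℓ (u : ι) : ℓ u ∈ pointProdIdeal b c o J :=
    Ideal.mem_sup_left (Ideal.subset_span ⟨a u, hab u, rfl⟩)
  have hfJ (u : κ) : rename b (f u) ∈ pointProdIdeal b c o J :=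
    Ideal.mem_sup_right (Ideal.mem_map_of_mem _ (hf u))
  refine Ideal.subset_span ⟨Sum.elim ℓ (rename b ∘ f), Sum.rec hℓ hfJ, ?_⟩
  have hjac : jacobianMatrix (fun v => pderiv (Sum.elim a (b ∘ y) v)) (Sum.elim ℓ (rename b ∘ f)) =
      Matrix.fromBlocks 1 0 0
        ((rename b).mapMatrix (jacobianMatrix (fun v => pderiv (y v)) f)) := by
    apply Matrix.ext
    rintro (u | u) (v | v)
    · by_cases huv : u = v
      · subst huv
        simp [jacobianMatrix, ℓ, pderiv_X_of_ne (hao u).symm]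
      · simp [jacobianMatrix, ℓ, pderiv_X_of_ne (hao v).symm, pderiv_X_of_ne (ha.ne huv), huv]
    · have huv : a u ≠ b (y v) := fun h => hab u ⟨_, h.symm⟩
      have hov : o ≠ b (y v) := fun h => ho ⟨_, h.symm⟩
      simp [jacobianMatrix, ℓ, pderiv_X_of_ne huv, pderiv_X_of_ne hov]
    · exact pderiv_rename_of_notMem_range (hab v) (f u)
    · exact pderiv_rename hb _ _
  dsimp only
  rw [hjac, Matrix.det_fromBlocks_zero₂₁, Matrix.det_one, one_mul, ← AlgHom.map_det]
  rfl

theorem kahlerDifferent_pointProdIdeal (hb : Function.Injective b) (ho : o ∉ Set.range b)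
    {a : ι → V} (ha : Function.Injective a) (hab : ∀ u, a u ∉ Set.range b) (hao : ∀ u, a u ≠ o)
    (y : κ → τ) (c : V → R) (J : Ideal (MvPolynomial τ R)) :
    kahlerDifferent (fun v => pderiv (Sum.elim a (b ∘ y) v)) (pointProdIdeal b c o J) =
      (kahlerDifferent (fun v => pderiv (y v)) J).map (pointProdPullback b c o J) :=
  le_antisymm
    ((kahlerDifferent_le_comp_inr (fun v => pderiv (Sum.elim a (b ∘ y) v)) _).trans
      (kahlerDifferent_pointProdIdeal_le hb ho y c J))
    (le_kahlerDifferent_pointProdIdeal hb ho ha hab hao y c J)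

end PointProductDifferent

section PointProductHilbert

variable {K τ V : Type*} [Field K] {b : τ → V} {c : V → K} {o : V}

/-- The map `z ↦ x_o ^ i * z` from `K[Y]` to the coordinate ring of `{c} × Y`. -/
def pointProdShift (b : τ → V) (c : V → K) (o : V) (J : Ideal (MvPolynomial τ K)) (i : ℕ) :
    (MvPolynomial τ K ⧸ J) →ₗ[K] MvPolynomial V K ⧸ pointProdIdeal b c o J :=
  LinearMap.mulLeft K (Ideal.Quotient.mk _ (X o ^ i)) ∘ₗ (pointProdPullback b c o J).toLinearMap

lemma pointProdShift_apply (J : Ideal (MvPolynomial τ K)) (i : ℕ) (z : MvPolynomial τ K ⧸ J) :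
    pointProdShift b c o J i z =
      Ideal.Quotient.mk _ (X o ^ i) * pointProdPullback b c o J z := rfl

lemma pointProdRetraction_pointProdShift (hb : Function.Injective b) (ho : o ∉ Set.range b)
    (hc : c o = 1) {J : Ideal (MvPolynomial τ K)} (i : ℕ) (z : MvPolynomial τ K ⧸ J) :
    pointProdRetraction hb ho hc J (pointProdShift b c o J i z) = z := by
  have ho1 : pointProdRetraction hb ho hc J (Ideal.Quotient.mk _ (X o ^ i)) = 1 := by
    change Ideal.Quotient.mk J (specialize b c (X o ^ i)) = 1
    rw [map_pow, specialize_X_of_notMem_range c ho, hc, map_one, one_pow, map_one]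
  rw [pointProdShift_apply, map_mul, ho1, one_mul, pointProdRetraction_pointProdPullback]

lemma mk_eq_pointProdShift_pointProdRetraction (hb : Function.Injective b) (ho : o ∉ Set.range b)
    (hc : c o = 1) (J : Ideal (MvPolynomial τ K)) {F : MvPolynomial V K} {i j : ℕ}
    (hF : IsWeightedHomogeneous (biweight b) F (i, j)) :
    Ideal.Quotient.mk (pointProdIdeal b c o J) F =
      pointProdShift b c o J i (pointProdRetraction hb ho hc J (Ideal.Quotient.mk _ F)) :=
  Ideal.Quotient.eq.2
    (Ideal.mem_sup_left (sub_pow_mul_rename_specialize_mem_pointIdeal hb c o hF))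

lemma map_pointProdShift_inf_degreePiece (hb : Function.Injective b) (ho : o ∉ Set.range b)
    (hc : c o = 1) {J : Ideal (MvPolynomial τ K)} (A : Ideal (MvPolynomial τ K ⧸ J)) (i j : ℕ) :
    (A.restrictScalars K ⊓ degreePiece 1 J j).map (pointProdShift b c o J i) =
      (A.map (pointProdPullback b c o J)).restrictScalars K ⊓
        degreePiece (biweight b) (pointProdIdeal b c o J) (i, j) := by
  apply le_antisymm
  · rintro _ ⟨_, ⟨hzA, G, hG, rfl⟩, rfl⟩
    rw [pointProdShift_apply]
    refine ⟨Ideal.mul_mem_left _ _ (Ideal.mem_map_of_mem _ hzA), X o ^ i * rename b G, ?_, rfl⟩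
    have hX : IsWeightedHomogeneous (biweight b) (X o : MvPolynomial V K) (1, 0) :=
      biweight_of_notMem_range ho ▸ isWeightedHomogeneous_X K (biweight b) o
    simpa using! (hX.pow i).mul (isWeightedHomogeneous_rename hb hG)
  · rintro _ ⟨hzA, F, hF, rfl⟩
    have hA : A.map (pointProdPullback b c o J) ≤ A.comap (pointProdRetraction hb ho hc J) :=
      Ideal.map_le_iff_le_comap.2 fun z hz => by
        rwa [Ideal.mem_comap, Ideal.mem_comap, pointProdRetraction_pointProdPullback]
    exact ⟨_, ⟨hA hzA, mk_mem_degreePiece J (isWeightedHomogeneous_specialize hb c hF)⟩,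
      (mk_eq_pointProdShift_pointProdRetraction hb ho hc J hF).symm⟩

theorem idealHilbertFunction_map_pointProdPullback (hb : Function.Injective b)
    (ho : o ∉ Set.range b) (hc : c o = 1) {J : Ideal (MvPolynomial τ K)}
    (A : Ideal (MvPolynomial τ K ⧸ J)) (i j : ℕ) :
    idealHilbertFunction (biweight b) (pointProdIdeal b c o J) (A.map (pointProdPullback b c o J))
      (i, j) = idealHilbertFunction 1 J A j := by
  have hinj : Function.Injective (pointProdShift b c o J i) :=
    Function.LeftInverse.injective (pointProdRetraction_pointProdShift hb ho hc i)
  rw [idealHilbertFunction, ← map_pointProdShift_inf_degreePiece hb ho hc]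
  exact (Submodule.equivMapOfInjective _ hinj _).finrank_eq.symm

end PointProductHilbert

section ConstantBlock

variable {K τ V ι κ : Type*} [Field K] [Fintype ι] [Fintype κ] [DecidableEq ι] [DecidableEq κ]

theorem idealHilbertFunction_kahlerDifferent_of_block_proportional {b : τ → V}
    (hb : Function.Injective b) {o : V} (ho : o ∉ Set.range b) {a : ι → V}
    (ha : Function.Injective a) (hab : ∀ u, a u ∉ Set.range b) (hao : ∀ u, a u ≠ o) (y : κ → τ)
    {P : Set (V → K)} {x : V → K} (hxo : x o ≠ 0)
    (hP : ∀ p ∈ P, ∃ t : K, t ≠ 0 ∧ ∀ v ∉ Set.range b, p v = t * x v) (i j : ℕ) :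
    idealHilbertFunction (biweight b) (homogeneousVanishingIdeal (biweight b) P)
        (kahlerDifferent (fun v => pderiv (Sum.elim a (b ∘ y) v)) _) (i, j) =
      idealHilbertFunction 1 (homogeneousVanishingIdeal (1 : τ → ℕ) ((· ∘ b) '' P))
        (kahlerDifferent (fun v => pderiv (y v)) _) j := by
  let c (v : V) : K := x v / x o
  have hc : c o = 1 := div_self hxo
  have hPo : ∀ p ∈ P, p o ≠ 0 := fun p hp => by
    obtain ⟨t, ht, hpt⟩ := hP p hp
    exact hpt o ho ▸ mul_ne_zero ht hxo
  have hPc : ∀ p ∈ P, ∀ v ∉ Set.range b, p v = c v * p o := fun p hp v hv => by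
    obtain ⟨t, -, hpt⟩ := hP p hp
    rw [hpt v hv, hpt o ho, mul_left_comm, div_mul_cancel₀ _ hxo]
  rw [homogeneousVanishingIdeal_eq_pointProdIdeal hb ho hPo hPc,
    kahlerDifferent_pointProdIdeal hb ho ha hab hao,
    idealHilbertFunction_map_pointProdPullback hb ho hc]

end ConstantBlock

section Biprojective

variable {K : Type} {m n : ℕ}

/-- The coordinate vectors, indexed by the variables of `BiRing K m n`, of the points in `P`. -/
def coordVectors (P : Set (BiPt K m n)) : Set (Fin (m + 1) ⊕ Fin (n + 1) → K) :=
  (fun p => Sum.elim p.1 p.2) '' P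

lemma forall_mem_coordVectors {P : Set (BiPt K m n)} {Q : (Fin (m + 1) ⊕ Fin (n + 1) → K) → Prop} :
    (∀ p ∈ coordVectors P, Q p) ↔ ∀ p ∈ P, Q (Sum.elim p.1 p.2) :=
  Set.forall_mem_image

lemma image_comp_inl_coordVectors (P : Set (BiPt K m n)) :
    (· ∘ Sum.inl) '' coordVectors P = Prod.fst '' P := by
  simp only [coordVectors, Set.image_image, Sum.elim_comp_inl]

lemma image_comp_inr_coordVectors (P : Set (BiPt K m n)) :
    (· ∘ Sum.inr) '' coordVectors P = Prod.snd '' P := by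
  simp only [coordVectors, Set.image_image, Sum.elim_comp_inr]

/-- The inclusion of the `ℕ`-valued bidegrees into the `ℤ`-valued ones. -/
def bidegreeCast : ℕ × ℕ →+ ℤ × ℤ :=
  (Nat.castAddMonoidHom ℤ).prodMap (Nat.castAddMonoidHom ℤ)

/-- The inclusion of the `ℕ`-valued bidegrees into the `ℤ`-valued ones, with the two components
interchanged. -/
def bidegreeCastSwap : ℕ × ℕ →+ ℤ × ℤ :=
  bidegreeCast.comp AddEquiv.prodComm.toAddMonoidHom

lemma bidegreeCast_injective : Function.Injective bidegreeCast :=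
  Nat.cast_injective.prodMap Nat.cast_injective

lemma bidegreeCastSwap_injective : Function.Injective bidegreeCastSwap :=
  bidegreeCast_injective.comp AddEquiv.prodComm.injective

lemma bidegreeCast_comp_biweight_inr :
    bidegreeCast ∘ biweight (Sum.inr : Fin (n + 1) → Fin (m + 1) ⊕ Fin (n + 1)) = biwt m n := by
  funext v
  rcases v with v | v
  · rw [Function.comp_apply, biweight_of_notMem_range (by simp)]; rfl
  · rw [Function.comp_apply, biweight_apply Sum.inr_injective]; rfl

lemma bidegreeCastSwap_comp_biweight_inl :
    bidegreeCastSwap ∘ biweight (Sum.inl : Fin (m + 1) → Fin (m + 1) ⊕ Fin (n + 1)) = biwt m n := by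
  funext v
  rcases v with v | v
  · rw [Function.comp_apply, biweight_apply Sum.inl_injective]; rfl
  · rw [Function.comp_apply, biweight_of_notMem_range (by simp)]; rfl

lemma natCast_comp_one (N : ℕ) : Nat.castAddMonoidHom ℤ ∘ (1 : Fin (N + 1) → ℕ) = wt1 N := rfl

variable [Field K]

lemma HFIdealB_natCast (I : Ideal (BiRing K m n)) (A : Ideal (BiRing K m n ⧸ I)) (i j : ℕ) :
    HFIdealB K I A ((i : ℤ), (j : ℤ)) = idealHilbertFunction (biweight Sum.inr) I A (i, j) := by
  rw [← idealHilbertFunction_addMonoidHom_comp bidegreeCast_injective,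
    bidegreeCast_comp_biweight_inr]
  rfl

lemma HFIdealB_natCast_swap (I : Ideal (BiRing K m n)) (A : Ideal (BiRing K m n ⧸ I))
    (i j : ℕ) :
    HFIdealB K I A ((i : ℤ), (j : ℤ)) = idealHilbertFunction (biweight Sum.inl) I A (j, i) := by
  rw [← idealHilbertFunction_addMonoidHom_comp bidegreeCastSwap_injective,
    bidegreeCastSwap_comp_biweight_inl]
  rfl

lemma homogeneousVanishingIdeal_biweight_inr (P : Set (Fin (m + 1) ⊕ Fin (n + 1) → K)) :
    homogeneousVanishingIdeal (biweight Sum.inr) P = homogeneousVanishingIdeal (biwt m n) P := by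
  rw [← bidegreeCast_comp_biweight_inr,
    homogeneousVanishingIdeal_addMonoidHom_comp bidegreeCast_injective]

lemma homogeneousVanishingIdeal_biweight_inl (P : Set (Fin (m + 1) ⊕ Fin (n + 1) → K)) :
    homogeneousVanishingIdeal (biweight Sum.inl) P = homogeneousVanishingIdeal (biwt m n) P := by
  rw [← bidegreeCastSwap_comp_biweight_inl,
    homogeneousVanishingIdeal_addMonoidHom_comp bidegreeCastSwap_injective]

lemma vIdealB_eq_homogeneousVanishingIdeal (𝕏 : Finset (BiPt K m n)) :
    vIdealB K 𝕏 = homogeneousVanishingIdeal (biwt m n) (coordVectors ↑𝕏) := by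
  simp only [homogeneousVanishingIdeal, forall_mem_coordVectors]; rfl

lemma vIdeal1_eq_homogeneousVanishingIdeal {N : ℕ} (Y : Finset (Fin (N + 1) → K)) :
    vIdeal1 K Y = homogeneousVanishingIdeal (wt1 N) ↑Y := rfl

lemma bvar_finSumFinEquiv (v : Fin m ⊕ Fin n) :
    bvar m n (finSumFinEquiv v) = Sum.elim (Sum.inl ∘ Fin.succ) (Sum.inr ∘ Fin.succ) v := by
  rcases v with v | v <;> simp [bvar, Fin.ext_iff]

lemma kdiffB_eq_kahlerDifferent {I : Ideal (BiRing K m n)} {r : ℕ} {H : Fin r → BiRing K m n}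
    (hH : Ideal.span (Set.range H) = I) :
    kdiffB K I H = kahlerDifferent
      (fun v => pderiv (Sum.elim (Sum.inl ∘ Fin.succ) (Sum.inr ∘ Fin.succ) v)) I := by
  simp only [← bvar_finSumFinEquiv]
  exact (kahlerDifferent_eq_span_range (fun v => pderiv (bvar m n v)) hH).symm.trans
    (kahlerDifferent_comp_equiv finSumFinEquiv _ I).symm

lemma kdiffB_eq_kahlerDifferent_swap {I : Ideal (BiRing K m n)} {r : ℕ}
    {H : Fin r → BiRing K m n} (hH : Ideal.span (Set.range H) = I) :
    kdiffB K I H = kahlerDifferent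
      (fun v => pderiv (Sum.elim (Sum.inr ∘ Fin.succ) (Sum.inl ∘ Fin.succ) v)) I := by
  rw [kdiffB_eq_kahlerDifferent hH, ← kahlerDifferent_comp_equiv (Equiv.sumComm _ _)]
  congr 1
  funext v
  rcases v with v | v <;> rfl

lemma kdiff1_eq_kahlerDifferent {N : ℕ} {I : Ideal (PRing K N)} {r : ℕ} {F : Fin r → PRing K N}
    (hF : Ideal.span (Set.range F) = I) :
    kdiff1 K I F = kahlerDifferent (fun v => pderiv (Fin.succ v)) I :=
  (kahlerDifferent_eq_span_range _ hF).symm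

lemma HFIdeal1_kdiff1_natCast {N : ℕ} (P : Set (Fin (N + 1) → K)) {r : ℕ} {F : Fin r → PRing K N}
    (hF : Ideal.span (Set.range F) = homogeneousVanishingIdeal (wt1 N) P) (d : ℕ) :
    HFIdeal1 K (homogeneousVanishingIdeal (wt1 N) P) (kdiff1 K _ F) d =
      idealHilbertFunction 1 (homogeneousVanishingIdeal (1 : Fin (N + 1) → ℕ) P)
        (kahlerDifferent (fun v => pderiv (Fin.succ v)) _) d := by
  rw [kdiff1_eq_kahlerDifferent hF]
  have hφ : Function.Injective (Nat.castAddMonoidHom ℤ) := Nat.cast_injective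
  rw [← natCast_comp_one, homogeneousVanishingIdeal_addMonoidHom_comp hφ]
  exact idealHilbertFunction_addMonoidHom_comp hφ 1 _ _ d

theorem HFIdealB_kdiffB_of_fst_proportional {P : Set (BiPt K m n)} {x : Fin (m + 1) → K}
    (hx : x 0 ≠ 0) (hP : ∀ p ∈ P, ∃ t : K, t ≠ 0 ∧ p.1 = t • x)
    {r : ℕ} {H : Fin r → BiRing K m n}
    (hH : Ideal.span (Set.range H) = homogeneousVanishingIdeal (biwt m n) (coordVectors P))
    {s : ℕ} {G : Fin s → PRing K n}
    (hG : Ideal.span (Set.range G) = homogeneousVanishingIdeal (wt1 n) (Prod.snd '' P))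
    (i j : ℕ) :
    HFIdealB K (homogeneousVanishingIdeal (biwt m n) (coordVectors P)) (kdiffB K _ H)
        ((i : ℤ), (j : ℤ)) =
      HFIdeal1 K (homogeneousVanishingIdeal (wt1 n) (Prod.snd '' P)) (kdiff1 K _ G) (j : ℤ) := by
  have hP' : ∀ p ∈ coordVectors P, ∃ t : K, t ≠ 0 ∧
      ∀ v ∉ Set.range Sum.inr, p v = t * (Sum.elim x 0 : Fin (m + 1) ⊕ Fin (n + 1) → K) v :=
    forall_mem_coordVectors.2 fun p hp => by
      obtain ⟨t, ht, hpx⟩ := hP p hp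
      exact ⟨t, ht, by simp [hpx]⟩
  have hcore := idealHilbertFunction_kahlerDifferent_of_block_proportional Sum.inr_injective
    (o := Sum.inl 0) (by simp) (a := Sum.inl ∘ Fin.succ)
    (Sum.inl_injective.comp (Fin.succ_injective m)) (by simp) (by simp) Fin.succ hx hP' i j
  rw [image_comp_inr_coordVectors, homogeneousVanishingIdeal_biweight_inr] at hcore
  rw [kdiffB_eq_kahlerDifferent hH, HFIdealB_natCast, HFIdeal1_kdiff1_natCast _ hG, hcore]

theorem HFIdealB_kdiffB_of_snd_proportional {P : Set (BiPt K m n)} {x : Fin (n + 1) → K}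
    (hx : x 0 ≠ 0) (hP : ∀ p ∈ P, ∃ t : K, t ≠ 0 ∧ p.2 = t • x)
    {r : ℕ} {H : Fin r → BiRing K m n}
    (hH : Ideal.span (Set.range H) = homogeneousVanishingIdeal (biwt m n) (coordVectors P))
    {s : ℕ} {F : Fin s → PRing K m}
    (hF : Ideal.span (Set.range F) = homogeneousVanishingIdeal (wt1 m) (Prod.fst '' P))
    (i j : ℕ) :
    HFIdealB K (homogeneousVanishingIdeal (biwt m n) (coordVectors P)) (kdiffB K _ H)
        ((i : ℤ), (j : ℤ)) =
      HFIdeal1 K (homogeneousVanishingIdeal (wt1 m) (Prod.fst '' P)) (kdiff1 K _ F) (i : ℤ) := by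
  have hP' : ∀ p ∈ coordVectors P, ∃ t : K, t ≠ 0 ∧
      ∀ v ∉ Set.range Sum.inl, p v = t * (Sum.elim 0 x : Fin (m + 1) ⊕ Fin (n + 1) → K) v :=
    forall_mem_coordVectors.2 fun p hp => by
      obtain ⟨t, ht, hpx⟩ := hP p hp
      exact ⟨t, ht, by simp [hpx]⟩
  have hcore := idealHilbertFunction_kahlerDifferent_of_block_proportional Sum.inl_injective
    (o := Sum.inr 0) (by simp) (a := Sum.inr ∘ Fin.succ)
    (Sum.inr_injective.comp (Fin.succ_injective n)) (by simp) (by simp) Fin.succ hx hP' j i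
  rw [image_comp_inl_coordVectors, homogeneousVanishingIdeal_biweight_inl] at hcore
  rw [kdiffB_eq_kahlerDifferent_swap hH, HFIdealB_natCast_swap, HFIdeal1_kdiff1_natCast _ hF, hcore]

end Biprojective

section ACM

variable {K : Type} [Field K] {m n : ℕ} {𝕏 : Finset (BiPt K m n)}

lemma one_notMem_span_x0B (hne : 𝕏.Nonempty) :
    1 ∉ Ideal.span {x0B K (vIdealB K 𝕏)} := fun h => by
  obtain ⟨p, hp⟩ := hne
  obtain ⟨z, hz⟩ := Ideal.mem_span_singleton'.1 h
  obtain ⟨F, rfl⟩ := Ideal.Quotient.mk_surjective z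
  have hF : F * X (Sum.inl 0) - 1 ∈ vIdealB K 𝕏 := Ideal.Quotient.eq.1 hz
  rw [vIdealB_eq_homogeneousVanishingIdeal, ← homogeneousVanishingIdeal_biweight_inr] at hF
  -- The bihomogeneous polynomials vanishing at `(x, y)` also vanish at the non-point `(0, y)`.
  have heval := eval_pow_mul_eq_zero hF ⟨p, hp, rfl⟩ (AddMonoidHom.fst ℕ ℕ) 0
  simp [biweight_of_notMem_range] at heval

lemma X_mem_vIdealB {v : Fin (m + 1) ⊕ Fin (n + 1)} (hv : ∀ p ∈ 𝕏, Sum.elim p.1 p.2 v = 0) :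
    X v ∈ vIdealB K 𝕏 :=
  Ideal.subset_span ⟨⟨_, isWeightedHomogeneous_X K _ v⟩, fun p hp => by
    rw [evalB, eval_X, hv p hp]⟩

lemma exists_fst_proportional_of_card_eq_one [DecidableEq K] (hne : 𝕏.Nonempty)
    (hACM : ACMxy K 𝕏) (hcard : (𝕏.image Prod.fst).card = 1) :
    ∃ x : Fin (m + 1) → K, x 0 ≠ 0 ∧
      ∀ p ∈ (𝕏 : Set (BiPt K m n)), ∃ t : K, t ≠ 0 ∧ p.1 = t • x := by
  obtain ⟨x, hx⟩ := Finset.card_eq_one.1 hcard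
  have h𝕏 : ∀ p ∈ 𝕏, p.1 = x := fun p hp =>
    Finset.mem_singleton.1 (hx ▸ Finset.mem_image_of_mem _ hp)
  refine ⟨x, fun hx0 => one_notMem_span_x0B hne ?_,
    fun p hp => ⟨1, one_ne_zero, by simp [h𝕏 p hp]⟩⟩
  have hX : x0B K (vIdealB K 𝕏) = 0 := Ideal.Quotient.eq_zero_iff_mem.2 <|
    X_mem_vIdealB fun p hp => by simp [h𝕏 p hp, hx0]
  rw [hACM.1 1 (by rw [hX, zero_mul])]
  exact Ideal.zero_mem _

lemma exists_snd_proportional_of_card_eq_one [DecidableEq K] (hne : 𝕏.Nonempty)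
    (hACM : ACMxy K 𝕏) (hcard : (𝕏.image Prod.snd).card = 1) :
    ∃ x : Fin (n + 1) → K, x 0 ≠ 0 ∧
      ∀ p ∈ (𝕏 : Set (BiPt K m n)), ∃ t : K, t ≠ 0 ∧ p.2 = t • x := by
  obtain ⟨x, hx⟩ := Finset.card_eq_one.1 hcard
  have h𝕏 : ∀ p ∈ 𝕏, p.2 = x := fun p hp =>
    Finset.mem_singleton.1 (hx ▸ Finset.mem_image_of_mem _ hp)
  refine ⟨x, fun hx0 => one_notMem_span_x0B hne ?_,
    fun p hp => ⟨1, one_ne_zero, by simp [h𝕏 p hp]⟩⟩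
  have hY : y0B K (vIdealB K 𝕏) = 0 := Ideal.Quotient.eq_zero_iff_mem.2 <|
    X_mem_vIdealB fun p hp => by simp [h𝕏 p hp, hx0]
  exact hACM.2 1 (by rw [hY, zero_mul]; exact Ideal.zero_mem _)

end ACM

end MultiProjPoints

open MultiProjPoints in
theorem statement_5_general (K : Type) [Field K] (m n : ℕ) (P : Set (BiPt K m n))
    (r₁ : ℕ) (F : Fin r₁ → PRing K m)
    (hFgen : Ideal.span (Set.range F) = homogeneousVanishingIdeal (wt1 m) (Prod.fst '' P))
    (r₂ : ℕ) (G : Fin r₂ → PRing K n)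
    (hGgen : Ideal.span (Set.range G) = homogeneousVanishingIdeal (wt1 n) (Prod.snd '' P))
    (r : ℕ) (H : Fin r → BiRing K m n)
    (hHgen : Ideal.span (Set.range H) = homogeneousVanishingIdeal (biwt m n) (coordVectors P)) :
    ((∃ x : Fin (m + 1) → K, x 0 ≠ 0 ∧ ∀ p ∈ P, ∃ t : K, t ≠ 0 ∧ p.1 = t • x) → ∀ i j : ℕ,
      HFIdealB K (homogeneousVanishingIdeal (biwt m n) (coordVectors P)) (kdiffB K _ H)
          ((i : ℤ), (j : ℤ)) =
        HFIdeal1 K (homogeneousVanishingIdeal (wt1 n) (Prod.snd '' P)) (kdiff1 K _ G) (j : ℤ)) ∧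
    ((∃ x : Fin (n + 1) → K, x 0 ≠ 0 ∧ ∀ p ∈ P, ∃ t : K, t ≠ 0 ∧ p.2 = t • x) → ∀ i j : ℕ,
      HFIdealB K (homogeneousVanishingIdeal (biwt m n) (coordVectors P)) (kdiffB K _ H)
          ((i : ℤ), (j : ℤ)) =
        HFIdeal1 K (homogeneousVanishingIdeal (wt1 m) (Prod.fst '' P)) (kdiff1 K _ F) (i : ℤ)) :=
  ⟨fun ⟨_, hx, hP⟩ => HFIdealB_kdiffB_of_fst_proportional hx hP hHgen hGgen,
    fun ⟨_, hx, hP⟩ => HFIdealB_kdiffB_of_snd_proportional hx hP hHgen hFgen⟩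

open MultiProjPoints in
/-- Proposition 3.3 (c): if `s₁ = 1` then
`HF_{ϑ_𝕏}(i,j) = HF_{ϑ_{𝕏₂}}(j)` for all `(i,j) ∈ ℕ²`, and if `s₂ = 1` then
`HF_{ϑ_𝕏}(i,j) = HF_{ϑ_{𝕏₁}}(i)` for all `(i,j) ∈ ℕ²`. -/
theorem statement_5 (K : Type) [Field K] [CharZero K] [DecidableEq K]
    (m n : ℕ) (𝕏 : Finset (BiPt K m n)) (hgood : GoodConfig K 𝕏)
    (hne : 𝕏.Nonempty) (hACM : ACMxy K 𝕏)
    -- a homogeneous system of generators of `I_{𝕏₁}`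
    (r₁ : ℕ) (F : Fin r₁ → PRing K m) (hFhom : ∀ k, ∃ d, IsHom1 K (F k) d)
    (hFgen : Ideal.span (Set.range F) = vIdeal1 K (𝕏.image Prod.fst))
    -- a homogeneous system of generators of `I_{𝕏₂}`
    (r₂ : ℕ) (G : Fin r₂ → PRing K n) (hGhom : ∀ k, ∃ d, IsHom1 K (G k) d)
    (hGgen : Ideal.span (Set.range G) = vIdeal1 K (𝕏.image Prod.snd))
    -- a bihomogeneous system of generators of `I_𝕏`
    (r : ℕ) (H : Fin r → BiRing K m n) (hHhom : ∀ k, ∃ d, IsBihom K (H k) d)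
    (hHgen : Ideal.span (Set.range H) = vIdealB K 𝕏) :
    ((𝕏.image Prod.fst).card = 1 →
      ∀ i j : ℕ,
        HFIdealB K (vIdealB K 𝕏) (kdiffB K (vIdealB K 𝕏) H) ((i : ℤ), (j : ℤ)) =
          HFIdeal1 K (vIdeal1 K (𝕏.image Prod.snd))
            (kdiff1 K (vIdeal1 K (𝕏.image Prod.snd)) G) (j : ℤ)) ∧
    ((𝕏.image Prod.snd).card = 1 →
      ∀ i j : ℕ,
        HFIdealB K (vIdealB K 𝕏) (kdiffB K (vIdealB K 𝕏) H) ((i : ℤ), (j : ℤ)) =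
          HFIdeal1 K (vIdeal1 K (𝕏.image Prod.fst))
            (kdiff1 K (vIdeal1 K (𝕏.image Prod.fst)) F) (i : ℤ)) := by
  rw [vIdeal1_eq_homogeneousVanishingIdeal, Finset.coe_image] at hFgen hGgen
  rw [vIdealB_eq_homogeneousVanishingIdeal] at hHgen
  rw [vIdealB_eq_homogeneousVanishingIdeal, vIdeal1_eq_homogeneousVanishingIdeal,
    vIdeal1_eq_homogeneousVanishingIdeal, Finset.coe_image, Finset.coe_image]
  exact (statement_5_general K m n 𝕏 r₁ F hFgen r₂ G hGgen r H hHgen).imp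
    (fun h hs₁ => h (exists_fst_proportional_of_card_eq_one hne hACM hs₁))
    (fun h hs₂ => h (exists_snd_proportional_of_card_eq_one hne hACM hs₂))
end
end

section
/- Let X be an ACM set of s distinct points in P^m × P^n with s_1 = |X_1| and s_2 = |X_2|. Then for all (i,j) ∈ N^2, HF_{ϑ_X}(i,j) ≤ HF_X(i,j) ≤ HF_{ϑ_X}(i + (m+1)(s_1−1), j + (n+1)(s_2−1)). -/
/- Common setup: finite sets of points in the multiprojective space
   `P^m x P^n` over a field `K` of characteristic zero, their bihomogeneous
   vanishing ideals, bigraded Hilbert functions, Kähler differents,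
   separators, Cayley-Bacharach property and complete intersections. -/

open MvPolynomial

set_option maxHeartbeats 1000000
set_option synthInstance.maxHeartbeats 400000

noncomputable section

/-!
For each `p ∈ 𝕏` we exhibit an element of `ϑ_𝕏` of bidegree
`(i + (m+1)(s₁-1), j + (n+1)(s₂-1))` vanishing at all points of `𝕏` except `p`. Such elements are
linearly independent, so `HF_{ϑ_𝕏}` at this bidegree is at least `s`, while evaluation at the points
embeds every bigraded piece of `R_𝕏` into `K^s`, so `HF_𝕏(i,j) ≤ s`.

For one projection `Y ⊆ P^N` and `p ∈ Y` with `p₀ ≠ 0`, let `L` be a product of `|Y| - 1` linear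
forms separating `p`, and let `F_v = (p₀ X_v - p_v X_0) L` for `1 ≤ v ≤ N`. The forms `F_v` vanish
on `Y`, and their Jacobian matrix at `p` is the scalar matrix `p₀ L(p)`, so its determinant is a
form of degree `N(|Y| - 1)` not vanishing at `p`. Multiply it by `L X_0^i`. The two resulting forms,
one for each projection, have a product in `ϑ_𝕏`, since the joint Jacobian matrix is block diagonal.

Regularity of `x₀, y₀` gives `p₀ ≠ 0` in both factors: for `x₀` because `x₀` would annihilate a
separator of `p`; and if `y₀` annihilates a separator, then every power of `x₀` divides it, which is
impossible on the line `{(t p.1, p.2)}`.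
-/

namespace MultiProjPoints

section JacobiMatrix

variable {R A σ τ ι κ μ : Type*} [CommRing R] [CommRing A]

/-- The Jacobian matrix `(∂F_k/∂X_{w v})_{k,v}` with respect to a chosen family `w` of variables;
its maximal minors are the generators of the Kähler differents. -/
def jacobiMatrix (w : ι → σ) (F : κ → MvPolynomial σ R) : Matrix κ ι (MvPolynomial σ R) :=
  Matrix.of fun k v => pderiv (w v) (F k)

theorem jacobiMatrix_map_mk_of_eq_sum [Fintype κ] (w : ι → σ) {I : Ideal (MvPolynomial σ R)}
    {H : κ → MvPolynomial σ R} (hH : ∀ k, H k ∈ I) {F : μ → MvPolynomial σ R}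
    {a : Matrix μ κ (MvPolynomial σ R)} (ha : ∀ u, ∑ k, a u k * H k = F u) :
    (jacobiMatrix w F).map (Ideal.Quotient.mk I) =
      a.map (Ideal.Quotient.mk I) * (jacobiMatrix w H).map (Ideal.Quotient.mk I) := by
  have hH0 : ∀ k, Ideal.Quotient.mk I (H k) = 0 := fun k => Ideal.Quotient.eq_zero_iff_mem.2 (hH k)
  ext u v
  simp [jacobiMatrix, Matrix.mul_apply, ← ha u, hH0]

theorem jacobiMatrix_sumMap_sumElim (a : ι → σ) (b : κ → τ)
    (F : ι → MvPolynomial σ R) (G : κ → MvPolynomial τ R) :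
    jacobiMatrix (Sum.map a b)
        (Sum.elim (fun u => rename Sum.inl (F u)) (fun u => rename Sum.inr (G u))) =
      Matrix.fromBlocks ((jacobiMatrix a F).map (rename Sum.inl)) 0 0
        ((jacobiMatrix b G).map (rename Sum.inr)) := by
  have hinl : ∀ (F : MvPolynomial σ R) (t : τ), pderiv (Sum.inr t) (rename Sum.inl F) = 0 :=
    fun F t => pderiv_eq_zero_of_notMem_vars fun ht => by
      classical simpa using vars_rename Sum.inl F ht
  have hinr : ∀ (G : MvPolynomial τ R) (s : σ), pderiv (Sum.inl s) (rename Sum.inr G) = 0 :=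
    fun G s => pderiv_eq_zero_of_notMem_vars fun hs => by
      classical simpa using vars_rename Sum.inr G hs
  ext1 u v
  rcases u with u | u <;> rcases v with v | v <;>
    simp [jacobiMatrix, hinl, hinr, pderiv_rename Sum.inl_injective,
      pderiv_rename Sum.inr_injective]

theorem det_jacobiMatrix_sumMap_sumElim [Fintype ι] [DecidableEq ι] [Fintype κ] [DecidableEq κ]
    (a : ι → σ) (b : κ → τ) (F : ι → MvPolynomial σ R) (G : κ → MvPolynomial τ R) :
    (jacobiMatrix (Sum.map a b)
        (Sum.elim (fun u => rename Sum.inl (F u)) (fun u => rename Sum.inr (G u)))).det =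
      rename Sum.inl (jacobiMatrix a F).det * rename Sum.inr (jacobiMatrix b G).det := by
  rw [jacobiMatrix_sumMap_sumElim, Matrix.det_fromBlocks_zero₂₁, AlgHom.map_det, AlgHom.map_det]
  rfl

theorem det_mul_mem_span_det_submatrix [Fintype ι] [DecidableEq ι] [Fintype κ]
    (M : Matrix ι κ A) (B : Matrix κ ι A) :
    (M * B).det ∈ Ideal.span (Set.range fun ρ : ι → κ => (B.submatrix ρ id).det) := by
  have hrows : M * B = fun u => ∑ k, M u k • B k := by
    ext u v
    simp [Matrix.mul_apply]
  have hexpand : (M * B).det = ∑ ρ : ι → κ, (∏ u, M u (ρ u)) • (B.submatrix ρ id).det := by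
    rw [hrows]
    change Matrix.detRowAlternating.toMultilinearMap _ = _
    simp only [MultilinearMap.map_sum, MultilinearMap.map_smul_univ]
    rfl
  rw [hexpand]
  exact Ideal.sum_mem _ fun ρ _ => Ideal.mul_mem_left _ _ (Ideal.subset_span ⟨ρ, rfl⟩)

end JacobiMatrix

section WeightedHomogeneous

variable {R σ τ ι M M' : Type*}

theorem isWeightedHomogeneous_rename_s6 [CommSemiring R] [AddCommMonoid M] [AddCommMonoid M']
    {w : σ → M} {w' : τ → M'} (f : σ → τ) (φ : M →+ M') (hw : ∀ x, w' (f x) = φ (w x))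
    {F : MvPolynomial σ R} {d : M} (hF : IsWeightedHomogeneous w F d) :
    IsWeightedHomogeneous w' (rename f F) (φ d) := by
  intro e he
  obtain ⟨u, rfl, hu⟩ := coeff_rename_ne_zero f F e he
  rw [← hF hu]
  simp [Finsupp.weight_apply, Finsupp.sum_mapDomain_index, add_smul, hw, map_finsuppSum]

variable [CommRing R]

theorem isWeightedHomogeneous_det [Fintype ι] [DecidableEq ι] [AddCommGroup M] {w : σ → M}
    {B : Matrix ι ι (MvPolynomial σ R)} {r c : ι → M}
    (hB : ∀ u v, IsWeightedHomogeneous w (B u v) (r u - c v)) :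
    IsWeightedHomogeneous w B.det (∑ u, r u - ∑ v, c v) := by
  rw [Matrix.det_apply]
  refine (weightedHomogeneousSubmodule R w _).sum_mem fun π _ => ?_
  have hprod : IsWeightedHomogeneous w (∏ v, B (π v) v) (∑ v, (r (π v) - c v)) :=
    IsWeightedHomogeneous.prod _ _ _ fun {v} _ => hB (π v) v
  rw [Finset.sum_sub_distrib, Equiv.sum_comp π r] at hprod
  rw [Units.smul_def]
  exact zsmul_mem hprod _

theorem isWeightedHomogeneous_det_jacobiMatrix [Fintype ι] [DecidableEq ι] [AddCommGroup M]
    {w : σ → M} {x : ι → σ} {F : ι → MvPolynomial σ R} {d : ι → M}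
    (hF : ∀ u, IsWeightedHomogeneous w (F u) (d u)) :
    IsWeightedHomogeneous w (jacobiMatrix x F).det (∑ u, d u - ∑ v, w (x v)) :=
  isWeightedHomogeneous_det fun u _ => (hF u).pderiv (sub_add_cancel _ _)

end WeightedHomogeneous

section ProjectiveSpace

variable {K : Type} [Field K] {N : ℕ} {Y : Finset (Fin (N + 1) → K)} {p : Fin (N + 1) → K}

/-- `F` is a separator of `p` in `Y ⊆ P^N`: the condition in the definition of `deg1`, and the
analogue of `IsSepB` for one projective space. -/
def IsSep1 (Y : Finset (Fin (N + 1) → K)) (p : Fin (N + 1) → K) (F : PRing K N) : Prop :=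
  eval p F ≠ 0 ∧ ∀ q ∈ Y, q ≠ p → eval q F = 0

theorem isHom1_X (v : Fin (N + 1)) : IsHom1 K (X v : PRing K N) 1 :=
  isWeightedHomogeneous_X K (wt1 N) v

theorem isHom1_C_mul_X_sub_C_mul_X (a b : K) (u v : Fin (N + 1)) :
    IsHom1 K (C a * X u - C b * X v : PRing K N) 1 :=
  ((isHom1_X u).C_mul a).sub ((isHom1_X v).C_mul b)

theorem exists_mul_ne_mul_of_forall_ne_smul {ι : Type*} {a b : ι → K} (ha : a ≠ 0)
    (h : ∀ c : K, b ≠ c • a) : ∃ j k, a j * b k ≠ a k * b j := by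
  by_contra! hcon
  obtain ⟨j, hj⟩ := Function.ne_iff.1 ha
  refine h (b j / a j) (funext fun k => ?_)
  rw [Pi.smul_apply, smul_eq_mul, div_mul_eq_mul_div, eq_div_iff hj]
  linear_combination hcon j k

theorem GoodSet.exists_linearForm (hY : GoodSet K Y) {a : Fin (N + 1) → K} (ha : a ∈ Y) (hp : p ∈ Y)
    (hap : a ≠ p) : ∃ l : PRing K N, IsHom1 K l 1 ∧ eval a l = 0 ∧ eval p l ≠ 0 := by
  have hprop : ∀ c : K, p ≠ c • a := by
    rintro c rfl
    have hc : c ≠ 0 := fun hc => hY.1 _ hp (by rw [hc, zero_smul])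
    exact hap (hY.2 _ hp a ha ⟨c, hc, rfl⟩).symm
  obtain ⟨j, k, hjk⟩ := exists_mul_ne_mul_of_forall_ne_smul (hY.1 a ha) hprop
  refine ⟨_, isHom1_C_mul_X_sub_C_mul_X (a j) (a k) k j, ?_, ?_⟩
  · simp [mul_comm]
  · simpa [sub_eq_zero] using hjk

theorem GoodSet.exists_isSep1 (hY : GoodSet K Y) (hp : p ∈ Y) :
    ∃ L : PRing K N, IsHom1 K L ((Y.card : ℤ) - 1) ∧ IsSep1 Y p L := by
  classical
  have hform : ∀ a ∈ Y.erase p, ∃ l : PRing K N, IsHom1 K l 1 ∧ eval a l = 0 ∧ eval p l ≠ 0 :=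
    fun a ha => hY.exists_linearForm (Finset.mem_of_mem_erase ha) hp (Finset.ne_of_mem_erase ha)
  choose! l hl hla hlp using hform
  refine ⟨∏ a ∈ Y.erase p, l a, ?_, ?_, fun q hq hqp => ?_⟩
  · have hprod := IsWeightedHomogeneous.prod (w := wt1 N) _ l (fun _ => 1) fun {a} => hl a
    rwa [Finset.sum_const, nsmul_one, Finset.cast_card_erase_of_mem hp] at hprod
  · rw [map_prod]
    exact Finset.prod_ne_zero_iff.2 hlp
  · have hq' : q ∈ Y.erase p := Finset.mem_erase.2 ⟨hqp, hq⟩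
    rw [map_prod]
    exact Finset.prod_eq_zero hq' (hla q hq')

/-- The linear forms `p₀ X_v - p_v X_0`, `1 ≤ v ≤ N`, which cut out the point `p` when `p₀ ≠ 0`. -/
def pointForm (p : Fin (N + 1) → K) (v : Fin N) : PRing K N :=
  C (p 0) * X v.succ - C (p v.succ) * X 0

theorem isHom1_pointForm_mul {L : PRing K N} {d : ℤ} (hL : IsHom1 K L d) (v : Fin N) :
    IsHom1 K (pointForm p v * L) (1 + d) :=
  (isHom1_C_mul_X_sub_C_mul_X _ _ _ _).mul hL

theorem eval_pointForm_self (v : Fin N) : eval p (pointForm p v) = 0 := by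
  simp [pointForm, mul_comm]

theorem IsSep1.eval_pointForm_mul {L : PRing K N} (hL : IsSep1 Y p L) (v : Fin N)
    {q : Fin (N + 1) → K} (hq : q ∈ Y) : eval q (pointForm p v * L) = 0 := by
  rw [map_mul]
  by_cases hqp : q = p
  · rw [hqp, eval_pointForm_self, zero_mul]
  · rw [hL.2 q hq hqp, mul_zero]

theorem pderiv_succ_pointForm (u v : Fin N) :
    pderiv v.succ (pointForm p u) = if u = v then C (p 0) else 0 := by
  simp [pointForm, pderiv_X, Pi.single_apply]

theorem eval_det_jacobiMatrix_pointForm_mul (p : Fin (N + 1) → K) (L : PRing K N) :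
    eval p (jacobiMatrix Fin.succ fun v => pointForm p v * L).det = (p 0 * eval p L) ^ N := by
  have hdiag : (eval p).mapMatrix (jacobiMatrix Fin.succ fun v => pointForm p v * L) =
      Matrix.diagonal fun _ => p 0 * eval p L := by
    ext u v
    simp only [jacobiMatrix, RingHom.mapMatrix_apply, Matrix.map_apply, Matrix.of_apply,
      pderiv_mul, map_add, map_mul, eval_pointForm_self, zero_mul, add_zero, pderiv_succ_pointForm,
      Matrix.diagonal_apply]
    split_ifs <;> simp
  rw [RingHom.map_det, hdiag, Matrix.det_diagonal, Finset.prod_const, Finset.card_fin]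

/-- A multiple of a Jacobian determinant which separates `p` whenever `L` does and `p₀ ≠ 0`; the
factor `X_0^i` adjusts the degree. -/
def differentSeparator (p : Fin (N + 1) → K) (L : PRing K N) (i : ℕ) : PRing K N :=
  L * X 0 ^ i * (jacobiMatrix Fin.succ fun v => pointForm p v * L).det

theorem isHom1_differentSeparator {L : PRing K N} {d : ℤ} (hL : IsHom1 K L d) (i : ℕ) :
    IsHom1 K (differentSeparator p L i) (i + (N + 1) * d) := by
  have hdet : IsHom1 K (jacobiMatrix Fin.succ fun v => pointForm p v * L).det _ :=
    isWeightedHomogeneous_det_jacobiMatrix fun v => isHom1_pointForm_mul hL v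
  have hdeg : i + (N + 1) * d =
      d + i • 1 + (∑ _u : Fin N, (1 + d) - ∑ v : Fin N, wt1 N v.succ) := by
    simp only [wt1, Finset.sum_const, Finset.card_univ, Fintype.card_fin, nsmul_eq_mul]
    ring
  rw [hdeg]
  exact (hL.mul ((isHom1_X 0).pow i)).mul hdet

theorem isSep1_differentSeparator {L : PRing K N} (hL : IsSep1 Y p L) (hp : p 0 ≠ 0) (i : ℕ) :
    IsSep1 Y p (differentSeparator p L i) := by
  refine ⟨?_, fun q hq hqp => ?_⟩
  · simp only [differentSeparator, map_mul, map_pow, eval_X, eval_det_jacobiMatrix_pointForm_mul]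
    exact mul_ne_zero (mul_ne_zero hL.1 (pow_ne_zero _ hp)) (pow_ne_zero _ (mul_ne_zero hp hL.1))
  · simp only [differentSeparator, map_mul, hL.2 q hq hqp, zero_mul]

end ProjectiveSpace

section Biprojective

variable {K : Type} [Field K] {m n : ℕ} {𝕏 : Finset (BiPt K m n)} {p : BiPt K m n}

theorem evalB_rename_inl (F : PRing K m) : evalB K p (rename Sum.inl F) = eval p.1 F := by
  rw [evalB, eval_rename, Sum.elim_comp_inl]

theorem evalB_rename_inr (G : PRing K n) : evalB K p (rename Sum.inr G) = eval p.2 G := by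
  rw [evalB, eval_rename, Sum.elim_comp_inr]

theorem evalB_mul (F G : BiRing K m n) : evalB K p (F * G) = evalB K p F * evalB K p G :=
  map_mul _ F G

theorem IsHom1.isBihom_rename_inl {F : PRing K m} {d : ℤ} (hF : IsHom1 K F d) :
    IsBihom K (rename Sum.inl F : BiRing K m n) (d, 0) :=
  isWeightedHomogeneous_rename_s6 Sum.inl (AddMonoidHom.inl ℤ ℤ) (fun _ => rfl) hF

theorem IsHom1.isBihom_rename_inr {G : PRing K n} {d : ℤ} (hG : IsHom1 K G d) :
    IsBihom K (rename Sum.inr G : BiRing K m n) (0, d) :=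
  isWeightedHomogeneous_rename_s6 Sum.inr (AddMonoidHom.inr ℤ ℤ) (fun _ => rfl) hG

theorem IsHom1.isBihom_rename_mul_rename {F : PRing K m} {G : PRing K n} {a b : ℤ}
    (hF : IsHom1 K F a) (hG : IsHom1 K G b) :
    IsBihom K (rename Sum.inl F * rename Sum.inr G : BiRing K m n) (a, b) := by
  simpa [IsBihom] using hF.isBihom_rename_inl.mul hG.isBihom_rename_inr

theorem IsBihom.mem_vIdealB {F : BiRing K m n} {d : ℤ × ℤ} (hF : IsBihom K F d)
    (h : ∀ p ∈ 𝕏, evalB K p F = 0) : F ∈ vIdealB K 𝕏 :=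
  Ideal.subset_span ⟨⟨d, hF⟩, h⟩

theorem vIdealB_le_ker {A : Type*} [CommRing A] {f : BiRing K m n →+* A}
    (hf : ∀ F d, IsBihom K F d → (∀ p ∈ 𝕏, evalB K p F = 0) → f F = 0) :
    vIdealB K 𝕏 ≤ RingHom.ker f :=
  Ideal.span_le.2 fun F ⟨⟨d, hd⟩, hF⟩ => hf F d hd hF

theorem isSepB_rename_mul_rename [DecidableEq K] {F : PRing K m} {G : PRing K n}
    (hF : IsSep1 (𝕏.image Prod.fst) p.1 F) (hG : IsSep1 (𝕏.image Prod.snd) p.2 G) :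
    IsSepB K 𝕏 p (rename Sum.inl F * rename Sum.inr G) := by
  simp only [IsSepB, evalB_mul, evalB_rename_inl, evalB_rename_inr]
  refine ⟨mul_ne_zero hF.1 hG.1, fun q hq hqp => ?_⟩
  by_cases hfst : q.1 = p.1
  · have hsnd : q.2 ≠ p.2 := fun hsnd => hqp (Prod.ext hfst hsnd)
    rw [hG.2 _ (Finset.mem_image_of_mem _ hq) hsnd, mul_zero]
  · rw [hF.2 _ (Finset.mem_image_of_mem _ hq) hfst, zero_mul]

theorem GoodConfig.goodSet_image_fst [DecidableEq K] (h𝕏 : GoodConfig K 𝕏) :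
    GoodSet K (𝕏.image Prod.fst) := by
  simp only [GoodSet, Finset.forall_mem_image]
  exact ⟨fun p hp => (h𝕏.1 p hp).1, h𝕏.2.1⟩

theorem GoodConfig.goodSet_image_snd [DecidableEq K] (h𝕏 : GoodConfig K 𝕏) :
    GoodSet K (𝕏.image Prod.snd) := by
  simp only [GoodSet, Finset.forall_mem_image]
  exact ⟨fun p hp => (h𝕏.1 p hp).2, h𝕏.2.2⟩

theorem GoodConfig.exists_isSepB (h𝕏 : GoodConfig K 𝕏) (hp : p ∈ 𝕏) :
    ∃ L d, IsBihom K L d ∧ IsSepB K 𝕏 p L := by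
  classical
  obtain ⟨F, hF, hFsep⟩ := h𝕏.goodSet_image_fst.exists_isSep1 (Finset.mem_image_of_mem _ hp)
  obtain ⟨G, hG, hGsep⟩ := h𝕏.goodSet_image_snd.exists_isSep1 (Finset.mem_image_of_mem _ hp)
  exact ⟨_, _, hF.isBihom_rename_mul_rename hG, isSepB_rename_mul_rename hFsep hGsep⟩

end Biprojective

section RegularSequence

theorem RegPair.pow_dvd_of_mul_eq_zero {A : Type*} [CommRing A] {a b z : A} (h : RegPair a b)
    (hz : b * z = 0) (k : ℕ) : a ^ k ∣ z := by
  induction k generalizing z with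
  | zero => simp
  | succ k ih =>
    have hbz : b * z ∈ Ideal.span {a} := by rw [hz]; exact Submodule.zero_mem _
    obtain ⟨y, rfl⟩ := Ideal.mem_span_singleton.1 (h.2 z hbz)
    have hby : b * y = 0 := h.1 _ (by rw [mul_left_comm, hz])
    rw [pow_succ']
    exact mul_dvd_mul_left a (ih hby)

variable {K : Type} [Field K] {m n : ℕ} {𝕏 : Finset (BiPt K m n)} {p : BiPt K m n}

theorem IsSepB.mul_mem_vIdealB {l L : BiRing K m n} {d e : ℤ × ℤ} (hsep : IsSepB K 𝕏 p L)
    (hL : IsBihom K L d) (hl : IsBihom K l e) (hlp : evalB K p l = 0) : l * L ∈ vIdealB K 𝕏 := by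
  refine IsBihom.mem_vIdealB (hl.mul hL) fun q hq => ?_
  rw [evalB_mul]
  by_cases hqp : q = p
  · rw [hqp, hlp, zero_mul]
  · rw [hsep.2 q hq hqp, mul_zero]

/-- Restriction of polynomials to the affine line `{(t p.1, p.2)}`, which lies in the cone over
every set of points containing `p`. -/
def restrictLine (p : BiPt K m n) : BiRing K m n →ₐ[K] Polynomial K :=
  aeval (Sum.elim (fun i => Polynomial.C (p.1 i) * Polynomial.X) (fun j => Polynomial.C (p.2 j)))

theorem IsBihom.exists_restrictLine_eq {F : BiRing K m n} {d : ℤ × ℤ} (hF : IsBihom K F d)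
    (p : BiPt K m n) :
    ∃ k : ℕ, restrictLine p F = Polynomial.C (evalB K p F) * Polynomial.X ^ k := by
  refine ⟨d.1.toNat, ?_⟩
  rw [restrictLine, evalB, aeval_def, eval₂_eq', eval_eq', map_sum, Finset.sum_mul]
  refine Finset.sum_congr rfl fun e he => ?_
  have hdeg : d.1.toNat = ∑ i, e (Sum.inl i) := by
    have hweight := hF (mem_support_iff.1 he)
    simp [← hweight, Finsupp.weight_eq_sum, biwt, Prod.fst_sum,
      ← Nat.cast_sum]
  simp only [hdeg, Fintype.prod_sum_type, Sum.elim_inl, Sum.elim_inr, mul_pow,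
    Finset.prod_mul_distrib, map_mul, map_prod, map_pow, Finset.prod_pow_eq_pow_sum,
    Polynomial.algebraMap_eq]
  ring

theorem vIdealB_le_ker_restrictLine (hp : p ∈ 𝕏) :
    vIdealB K 𝕏 ≤ RingHom.ker (restrictLine p : BiRing K m n →+* Polynomial K) := by
  refine vIdealB_le_ker fun F d hd hF => ?_
  obtain ⟨k, hk⟩ := hd.exists_restrictLine_eq p
  rw [RingHom.coe_coe, hk, hF p hp, map_zero, zero_mul]

theorem IsBihom.evalB_eq_zero_of_forall_x0B_pow_dvd {F : BiRing K m n} {d : ℤ × ℤ}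
    (hF : IsBihom K F d) (hp : p ∈ 𝕏)
    (hdvd : ∀ k : ℕ, x0B K (vIdealB K 𝕏) ^ k ∣ Ideal.Quotient.mk _ F) : evalB K p F = 0 := by
  obtain ⟨k, hk⟩ := hF.exists_restrictLine_eq p
  let g := Ideal.Quotient.lift (vIdealB K 𝕏) _ (vIdealB_le_ker_restrictLine hp)
  have hg : ∀ G, g (Ideal.Quotient.mk _ G) = restrictLine p G := fun _ => rfl
  have hline : restrictLine p (X (Sum.inl 0)) ^ (k + 1) ∣ restrictLine p F := by
    simpa only [x0B, map_pow, hg] using map_dvd g (hdvd (k + 1))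
  have hX : Polynomial.X ^ (k + 1) ∣ restrictLine p F := by
    refine (pow_dvd_pow_of_dvd ?_ _).trans hline
    simp [restrictLine]
  simpa [hk] using Polynomial.X_pow_dvd_iff.1 hX k k.lt_succ_self

theorem ACMxy.fst_zero_ne_zero (hACM : ACMxy K 𝕏) (h𝕏 : GoodConfig K 𝕏) (hp : p ∈ 𝕏) :
    p.1 0 ≠ 0 := by
  intro h0
  obtain ⟨L, d, hL, hsep⟩ := h𝕏.exists_isSepB hp
  have hmem : X (Sum.inl 0) * L ∈ vIdealB K 𝕏 :=
    hsep.mul_mem_vIdealB hL (isWeightedHomogeneous_X K _ _) (by simpa [evalB] using h0)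
  have hzero : Ideal.Quotient.mk (vIdealB K 𝕏) L = 0 :=
    hACM.1 _ (by rwa [x0B, ← map_mul, Ideal.Quotient.eq_zero_iff_mem])
  exact hsep.1 (hL.evalB_eq_zero_of_forall_x0B_pow_dvd hp fun k => hzero ▸ dvd_zero _)

theorem ACMxy.snd_zero_ne_zero (hACM : ACMxy K 𝕏) (h𝕏 : GoodConfig K 𝕏) (hp : p ∈ 𝕏) :
    p.2 0 ≠ 0 := by
  intro h0
  obtain ⟨L, d, hL, hsep⟩ := h𝕏.exists_isSepB hp
  have hmem : X (Sum.inr 0) * L ∈ vIdealB K 𝕏 :=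
    hsep.mul_mem_vIdealB hL (isWeightedHomogeneous_X K _ _) (by simpa [evalB] using h0)
  have hzero : y0B K (vIdealB K 𝕏) * Ideal.Quotient.mk (vIdealB K 𝕏) L = 0 := by
    rwa [y0B, ← map_mul, Ideal.Quotient.eq_zero_iff_mem]
  exact hsep.1 (hL.evalB_eq_zero_of_forall_x0B_pow_dvd hp (hACM.pow_dvd_of_mul_eq_zero hzero))

end RegularSequence

section KaehlerDifferent

variable {K : Type} [Field K] {m n r : ℕ} {I : Ideal (BiRing K m n)} {H : Fin r → BiRing K m n}

theorem mk_det_jacobiMatrix_mem_kdiffB (hH : Ideal.span (Set.range H) = I)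
    {F : Fin (m + n) → BiRing K m n} (hF : ∀ u, F u ∈ I) :
    Ideal.Quotient.mk I (jacobiMatrix (bvar m n) F).det ∈ kdiffB K I H := by
  have hcoeff : ∀ u, ∃ a : Fin r → BiRing K m n, ∑ k, a k * H k = F u := fun u =>
    Ideal.mem_span_range_iff_exists_fun.1 (hH ▸ hF u)
  choose a ha using hcoeff
  have hHI : ∀ k, H k ∈ I := fun k => hH ▸ Ideal.subset_span ⟨k, rfl⟩
  have hminors : kdiffB K I H = Ideal.span (Set.range fun ρ : Fin (m + n) → Fin r =>
      (((jacobiMatrix (bvar m n) H).map (Ideal.Quotient.mk I)).submatrix ρ id).det) := by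
    simp only [kdiffB, RingHom.map_det]
    rfl
  rw [RingHom.map_det, RingHom.mapMatrix_apply, hminors,
    jacobiMatrix_map_mk_of_eq_sum (a := Matrix.of a) _ hHI ha]
  exact det_mul_mem_span_det_submatrix _ _

theorem bvar_comp_finSumFinEquiv :
    bvar m n ∘ finSumFinEquiv = Sum.map Fin.succ Fin.succ := by
  ext v
  rcases v with v | v <;> simp [bvar, Fin.ext_iff]

theorem mk_rename_det_mul_rename_det_mem_kdiffB (hH : Ideal.span (Set.range H) = I)
    {F : Fin m → PRing K m} {G : Fin n → PRing K n} (hF : ∀ u, rename Sum.inl (F u) ∈ I)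
    (hG : ∀ u, rename Sum.inr (G u) ∈ I) :
    Ideal.Quotient.mk I (rename Sum.inl (jacobiMatrix Fin.succ F).det *
      rename Sum.inr (jacobiMatrix Fin.succ G).det) ∈ kdiffB K I H := by
  let FG : Fin m ⊕ Fin n → BiRing K m n :=
    Sum.elim (fun u => rename Sum.inl (F u)) (fun u => rename Sum.inr (G u))
  have hreindex : jacobiMatrix (Sum.map Fin.succ Fin.succ) FG =
      (jacobiMatrix (bvar m n) (FG ∘ finSumFinEquiv.symm)).submatrix
        finSumFinEquiv finSumFinEquiv := by
    ext1 u v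
    simp [jacobiMatrix, ← bvar_comp_finSumFinEquiv]
  rw [← det_jacobiMatrix_sumMap_sumElim, hreindex, Matrix.det_submatrix_equiv_self]
  exact mk_det_jacobiMatrix_mem_kdiffB hH fun u => by
    rw [Function.comp_apply]
    rcases finSumFinEquiv.symm u with v | v
    exacts [hF v, hG v]

variable [DecidableEq K] {𝕏 : Finset (BiPt K m n)} {p : BiPt K m n}

theorem mk_differentSeparator_mul_mem_kdiffB (hH : Ideal.span (Set.range H) = vIdealB K 𝕏)
    {L : PRing K m} {M : PRing K n} {d e : ℤ} (hL : IsHom1 K L d) (hM : IsHom1 K M e)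
    (hLsep : IsSep1 (𝕏.image Prod.fst) p.1 L) (hMsep : IsSep1 (𝕏.image Prod.snd) p.2 M) (i j : ℕ) :
    Ideal.Quotient.mk (vIdealB K 𝕏) (rename Sum.inl (differentSeparator p.1 L i) *
      rename Sum.inr (differentSeparator p.2 M j)) ∈ kdiffB K (vIdealB K 𝕏) H := by
  have hF : ∀ v, rename Sum.inl (pointForm p.1 v * L) ∈ vIdealB K 𝕏 := fun v =>
    (isHom1_pointForm_mul hL v).isBihom_rename_inl.mem_vIdealB fun q hq => by
      rw [evalB_rename_inl, hLsep.eval_pointForm_mul v (Finset.mem_image_of_mem _ hq)]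
  have hG : ∀ v, rename Sum.inr (pointForm p.2 v * M) ∈ vIdealB K 𝕏 := fun v =>
    (isHom1_pointForm_mul hM v).isBihom_rename_inr.mem_vIdealB fun q hq => by
      rw [evalB_rename_inr, hMsep.eval_pointForm_mul v (Finset.mem_image_of_mem _ hq)]
  rw [differentSeparator, differentSeparator, map_mul (rename Sum.inl), map_mul (rename Sum.inr),
    mul_mul_mul_comm, map_mul (Ideal.Quotient.mk _)]
  exact Ideal.mul_mem_left _ _ (mk_rename_det_mul_rename_det_mem_kdiffB hH hF hG)

theorem GoodConfig.exists_isSepB_mem_kdiffB (h𝕏 : GoodConfig K 𝕏) (hp : p ∈ 𝕏)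
    (hx : p.1 0 ≠ 0) (hy : p.2 0 ≠ 0) (hH : Ideal.span (Set.range H) = vIdealB K 𝕏) (i j : ℕ) :
    ∃ D : BiRing K m n,
      IsBihom K D (i + (m + 1) * (((𝕏.image Prod.fst).card : ℤ) - 1),
        j + (n + 1) * (((𝕏.image Prod.snd).card : ℤ) - 1)) ∧
      IsSepB K 𝕏 p D ∧ Ideal.Quotient.mk (vIdealB K 𝕏) D ∈ kdiffB K (vIdealB K 𝕏) H := by
  obtain ⟨L, hL, hLsep⟩ := h𝕏.goodSet_image_fst.exists_isSep1 (Finset.mem_image_of_mem _ hp)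
  obtain ⟨M, hM, hMsep⟩ := h𝕏.goodSet_image_snd.exists_isSep1 (Finset.mem_image_of_mem _ hp)
  exact ⟨_,
    (isHom1_differentSeparator hL i).isBihom_rename_mul_rename (isHom1_differentSeparator hM j),
    isSepB_rename_mul_rename (isSep1_differentSeparator hLsep hx i)
      (isSep1_differentSeparator hMsep hy j),
    mk_differentSeparator_mul_mem_kdiffB hH hL hM hLsep hMsep i j⟩

end KaehlerDifferent

section HilbertFunction

variable {K : Type} [Field K] {m n : ℕ} {𝕏 : Finset (BiPt K m n)}

/-- Evaluation of elements of the coordinate ring `R_𝕏` at the chosen representatives of the points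
of `𝕏`. -/
def evalPoints (𝕏 : Finset (BiPt K m n)) : (BiRing K m n ⧸ vIdealB K 𝕏) →ₐ[K] (𝕏 → K) :=
  Ideal.Quotient.liftₐ (vIdealB K 𝕏) (AlgHom.pi fun p : 𝕏 => aeval (Sum.elim p.1.1 p.1.2)) <|
    vIdealB_le_ker (f := (AlgHom.pi fun p : 𝕏 => aeval (Sum.elim p.1.1 p.1.2)).toRingHom)
      fun _ _ _ hF => funext fun p => hF p p.2

theorem injective_evalPoints_domRestrict_degPieceB (d : ℤ × ℤ) : Function.Injective
    ((evalPoints 𝕏).toLinearMap.domRestrict (degPieceB K (vIdealB K 𝕏) d)) := by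
  rw [injective_iff_map_eq_zero]
  rintro ⟨_, F, hF, rfl⟩ h
  exact Subtype.ext <| Ideal.Quotient.eq_zero_iff_mem.2 <|
    IsBihom.mem_vIdealB hF fun p hp => congrFun h ⟨p, hp⟩

theorem finite_degPieceB (d : ℤ × ℤ) : Module.Finite K (degPieceB K (vIdealB K 𝕏) d) :=
  Module.Finite.of_injective _ (injective_evalPoints_domRestrict_degPieceB d)

theorem HFB_le_card (d : ℤ × ℤ) : HFB K 𝕏 d ≤ 𝕏.card := by
  simpa [HFB, HFI] using LinearMap.finrank_le_finrank_of_injective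
    (injective_evalPoints_domRestrict_degPieceB (𝕏 := 𝕏) d)

theorem HFIdealB_le_HFB (J : Ideal (BiRing K m n ⧸ vIdealB K 𝕏)) (d : ℤ × ℤ) :
    HFIdealB K (vIdealB K 𝕏) J d ≤ HFB K 𝕏 d :=
  have := finite_degPieceB (𝕏 := 𝕏) d
  Submodule.finrank_mono inf_le_right

theorem card_le_HFIdealB_of_forall_exists_isSepB {J : Ideal (BiRing K m n ⧸ vIdealB K 𝕏)}
    {d : ℤ × ℤ} (h : ∀ p ∈ 𝕏, ∃ F, IsBihom K F d ∧ IsSepB K 𝕏 p F ∧ Ideal.Quotient.mk _ F ∈ J) :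
    𝕏.card ≤ HFIdealB K (vIdealB K 𝕏) J d := by
  have := finite_degPieceB (𝕏 := 𝕏) d
  have := Submodule.finiteDimensional_of_le
    (inf_le_right : J.restrictScalars K ⊓ degPieceB K (vIdealB K 𝕏) d ≤ _)
  choose F hF hsep hJ using fun p : 𝕏 => h p p.2
  let b (p : 𝕏) : ↥(J.restrictScalars K ⊓ degPieceB K (vIdealB K 𝕏) d) :=
    ⟨Ideal.Quotient.mk _ (F p), hJ p, F p, hF p, rfl⟩
  let dual (p : 𝕏) : Module.Dual K ↥(J.restrictScalars K ⊓ degPieceB K (vIdealB K 𝕏) d) :=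
    (evalB K p.1 (F p))⁻¹ • (LinearMap.proj p ∘ₗ (evalPoints 𝕏).toLinearMap ∘ₗ Submodule.subtype _)
  have hdual (p q : 𝕏) : dual p (b q) = (evalB K p.1 (F p))⁻¹ * evalB K p.1 (F q) := rfl
  have hb : LinearIndependent K b := by
    refine .of_pairwise_dual_eq_zero_one b dual (fun p q hpq => ?_) fun p => ?_
    · simp only [hdual, (hsep q).2 p p.2 (Subtype.coe_ne_coe.2 hpq), mul_zero]
    · rw [hdual, inv_mul_cancel₀ (hsep p).1]
  simpa [HFIdealB] using hb.fintype_card_le_finrank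

end HilbertFunction

end MultiProjPoints

open MultiProjPoints in
theorem statement_6_general (K : Type) [Field K] [DecidableEq K]
    (m n : ℕ) (𝕏 : Finset (BiPt K m n)) (hgood : GoodConfig K 𝕏)
    (hx : ∀ p ∈ 𝕏, p.1 0 ≠ 0) (hy : ∀ p ∈ 𝕏, p.2 0 ≠ 0)
    (s₁ s₂ : ℕ) (hs₁ : s₁ = (𝕏.image Prod.fst).card)
    (hs₂ : s₂ = (𝕏.image Prod.snd).card)
    (r : ℕ) (H : Fin r → BiRing K m n)
    (hHgen : Ideal.span (Set.range H) = vIdealB K 𝕏) :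
    ∀ i j : ℕ,
      HFIdealB K (vIdealB K 𝕏) (kdiffB K (vIdealB K 𝕏) H) ((i : ℤ), (j : ℤ)) ≤
        HFB K 𝕏 ((i : ℤ), (j : ℤ)) ∧
      HFB K 𝕏 ((i : ℤ), (j : ℤ)) ≤
        HFIdealB K (vIdealB K 𝕏) (kdiffB K (vIdealB K 𝕏) H)
          ((i : ℤ) + (m + 1) * ((s₁ : ℤ) - 1), (j : ℤ) + (n + 1) * ((s₂ : ℤ) - 1)) := by
  subst hs₁ hs₂
  intro i j
  refine ⟨HFIdealB_le_HFB _ _, (HFB_le_card _).trans ?_⟩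
  exact card_le_HFIdealB_of_forall_exists_isSepB fun p hp =>
    hgood.exists_isSepB_mem_kdiffB hp (hx p hp) (hy p hp) hHgen i j

open MultiProjPoints in
/-- Proposition 3.3 (d): for an ACM set `𝕏` of `s` distinct
points, `HF_{ϑ_𝕏}(i,j) ≤ HF_𝕏(i,j) ≤ HF_{ϑ_𝕏}(i+(m+1)(s₁-1), j+(n+1)(s₂-1))`
for all `(i,j) ∈ ℕ²`. -/
theorem statement_6 (K : Type) [Field K] [CharZero K] [DecidableEq K]
    (m n : ℕ) (𝕏 : Finset (BiPt K m n)) (hgood : GoodConfig K 𝕏)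
    (hne : 𝕏.Nonempty) (hACM : ACMxy K 𝕏)
    (s₁ s₂ : ℕ) (hs₁ : s₁ = (𝕏.image Prod.fst).card)
    (hs₂ : s₂ = (𝕏.image Prod.snd).card)
    (r : ℕ) (H : Fin r → BiRing K m n) (hHhom : ∀ k, ∃ d, IsBihom K (H k) d)
    (hHgen : Ideal.span (Set.range H) = vIdealB K 𝕏) :
    ∀ i j : ℕ,
      HFIdealB K (vIdealB K 𝕏) (kdiffB K (vIdealB K 𝕏) H) ((i : ℤ), (j : ℤ)) ≤
        HFB K 𝕏 ((i : ℤ), (j : ℤ)) ∧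
      HFB K 𝕏 ((i : ℤ), (j : ℤ)) ≤
        HFIdealB K (vIdealB K 𝕏) (kdiffB K (vIdealB K 𝕏) H)
          ((i : ℤ) + (m + 1) * ((s₁ : ℤ) - 1), (j : ℤ) + (n + 1) * ((s₂ : ℤ) - 1)) := by
  exact statement_6_general K m n 𝕏 hgood (fun _ => hACM.fst_zero_ne_zero hgood)
    (fun _ => hACM.snd_zero_ne_zero hgood) s₁ s₂ hs₁ hs₂ r H hHgen
end
end

section
/- Let X be an ACM set of distinct points in P^m × P^n, let {h_1,...,h_t} be a bihomogeneous minimal system of generators of ϑ_X with deg(h_k) = (i_k, j_k), and set i_max = max{i_1,...,i_t}, j_max = max{j_1,...,j_t}. Let (i,j) ∈ N^2. Then: (a) if i ≥ i_max and HF_{ϑ_X}(i,j) = HF_{ϑ_X}(i+1,j), then HF_{ϑ_X}(i,j) = HF_{ϑ_X}(i+2,j); (b) if j ≥ j_max and HF_{ϑ_X}(i,j) = HF_{ϑ_X}(i,j+1), then HF_{ϑ_X}(i,j) = HF_{ϑ_X}(i,j+2). -/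
/- Common setup: finite sets of points in the multiprojective space
   `P^m x P^n` over a field `K` of characteristic zero, their bihomogeneous
   vanishing ideals, bigraded Hilbert functions, Kähler differents,
   separators, Cayley-Bacharach property and complete intersections. -/

open MvPolynomial

set_option maxHeartbeats 1000000
set_option synthInstance.maxHeartbeats 400000

noncomputable section

/- Write `R = S/I` and `J = (h_1,…,h_t)`, and let `e` be one of the directions `(1,0)`, `(0,1)`.
In degrees `d` at least as large as all `deg h_k` in the direction `e`, every cofactor of `h_k` has
positive degree in that direction, so that `J_{d+e} = R_e J_d`. Let `x ∈ R_e` be a nonzerodivisor.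
If `J_d` and `J_{d+e}` have the same dimension, then `x J_d ⊆ J_{d+e}` is an equality, and
`J_{d+2e} = R_e J_{d+e} = R_e (x J_d) = x J_{d+e}`; so multiplication by `x` is an isomorphism in
all later steps as well.

For `e = (1,0)` take `x = x₀`. For `e = (0,1)` take `y₀`: an element killed by `y₀` is a multiple of
`x₀` whose cofactor is again killed by `y₀`, hence it is divisible by all powers of `x₀`, and it
vanishes because degrees are bounded below. -/

attribute [local instance] MvPolynomial.weightedGradedAlgebra

namespace MultiProjPoints

open DirectSum Module Pointwise

section Quotient

variable {ι K A : Type*} [DecidableEq ι] [AddMonoid ι] [CommRing K] [CommRing A] [Algebra K A]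
  (𝒜 : ι → Submodule K A) [GradedAlgebra 𝒜] {I : Ideal A}

/-- The map from `A` to the external direct sum of the images in `A ⧸ I` of the graded pieces of
`A`, sending an element to the classes of its homogeneous components. For homogeneous `I` it
factors through `A ⧸ I` and shows that these images grade `A ⧸ I`. -/
def decomposeMk (I : Ideal A) :
    A →ₗ[K] ⨁ i, (𝒜 i).map (Ideal.Quotient.mkₐ K I).toLinearMap :=
  lmap (fun i => (Ideal.Quotient.mkₐ K I).toLinearMap.submoduleMap (𝒜 i)) ∘ₗ
    (decomposeLinearEquiv 𝒜).toLinearMap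

lemma coe_decomposeMk_apply (a : A) (i : ι) :
    (decomposeMk 𝒜 I a i : A ⧸ I) = Ideal.Quotient.mk I (decompose 𝒜 a i) :=
  rfl

lemma decomposeMk_of_mem {a : A} {i : ι} (ha : a ∈ 𝒜 i) :
    decomposeMk 𝒜 I a = lof K ι _ i ⟨Ideal.Quotient.mk I a, a, ha, rfl⟩ := by
  lift a to 𝒜 i using ha
  simp only [decomposeMk, LinearMap.comp_apply, LinearEquiv.coe_coe,
    decomposeLinearEquiv_apply_coe, lmap_lof]
  rfl

lemma decomposeMk_surjective (I : Ideal A) : Function.Surjective (decomposeMk 𝒜 I) :=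
  ((lmap_surjective _).mpr fun i => LinearMap.submoduleMap_surjective _ (𝒜 i)).comp
    (decomposeLinearEquiv 𝒜).surjective

lemma decomposeMk_eq_zero (hI : I.IsHomogeneous 𝒜) {a : A} (ha : a ∈ I) :
    decomposeMk 𝒜 I a = 0 := by
  ext i
  rw [coe_decomposeMk_apply, DirectSum.zero_apply, ZeroMemClass.coe_zero,
    Ideal.Quotient.eq_zero_iff_mem]
  exact hI i ha

lemma coeLinearMap_decomposeMk (a : A) :
    coeLinearMap (fun i => (𝒜 i).map (Ideal.Quotient.mkₐ K I).toLinearMap) (decomposeMk 𝒜 I a) =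
      Ideal.Quotient.mk I a := by
  induction a using Decomposition.inductionOn 𝒜 with
  | zero => simp only [map_zero]
  | homogeneous a => rw [decomposeMk_of_mem 𝒜 a.2, coeLinearMap_lof]
  | add a b ha hb => simp only [map_add, ha, hb]

lemma isInternal_map_mkₐ (hI : I.IsHomogeneous 𝒜) :
    IsInternal fun i => (𝒜 i).map (Ideal.Quotient.mkₐ K I).toLinearMap := by
  refine ⟨(injective_iff_map_eq_zero _).mpr fun z hz => ?_, fun z => ?_⟩
  · obtain ⟨a, rfl⟩ := decomposeMk_surjective 𝒜 I z
    have ha : Ideal.Quotient.mk I a = 0 := (coeLinearMap_decomposeMk 𝒜 a).symm.trans hz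
    exact decomposeMk_eq_zero 𝒜 hI (Ideal.Quotient.eq_zero_iff_mem.mp ha)
  · obtain ⟨a, rfl⟩ := Ideal.Quotient.mk_surjective z
    exact ⟨decomposeMk 𝒜 I a, coeLinearMap_decomposeMk 𝒜 a⟩

/-- The grading of the quotient of a graded algebra by a homogeneous ideal. For the bigrading of
`BiRing` its pieces are the `degPieceB`. -/
abbrev quotientGradedAlgebra (hI : I.IsHomogeneous 𝒜) :
    GradedAlgebra fun i => (𝒜 i).map (Ideal.Quotient.mkₐ K I).toLinearMap where
  one_mem := ⟨1, SetLike.GradedOne.one_mem, map_one (Ideal.Quotient.mk I)⟩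
  mul_mem := by
    rintro i j _ _ ⟨a, ha, rfl⟩ ⟨b, hb, rfl⟩
    exact ⟨a * b, SetLike.GradedMul.mul_mem ha hb, map_mul (Ideal.Quotient.mk I) a b⟩
  toDecomposition := (isInternal_map_mkₐ 𝒜 hI).chooseDecomposition

end Quotient

section GradedIdeal

variable {ι K R κ : Type*} [AddCommGroup ι] [DecidableEq ι] [CommRing K] [CommRing R] [Algebra K R]
  (ℛ : ι → Submodule K R)

/-- The homogeneous part `J_d` of degree `d` of an ideal `J` of a graded algebra; the
Hilbert function `HFIdealB` is its dimension. -/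
def idealPiece (J : Ideal R) (d : ι) : Submodule K R :=
  J.restrictScalars K ⊓ ℛ d

variable [GradedAlgebra ℛ]

lemma idealPiece_span {h : κ → R} {deg : κ → ι} (hh : ∀ k, h k ∈ ℛ (deg k)) (d : ι) :
    idealPiece ℛ (Ideal.span (Set.range h)) d = ⨆ k, ℛ (d - deg k) * Submodule.span K {h k} := by
  apply le_antisymm
  · rintro z ⟨hz, hzd⟩
    obtain ⟨c, rfl⟩ := Finsupp.mem_ideal_span_range_iff_exists_finsupp.mp hz
    rw [← decompose_of_mem_same ℛ hzd, Finsupp.sum, decompose_sum, DFinsupp.finsetSum_apply,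
      AddSubmonoidClass.coe_finsetSum]
    refine Submodule.sum_mem _ fun k _ => Submodule.mem_iSup_of_mem k ?_
    rw [← sub_add_cancel d (deg k), coe_decompose_mul_add_of_right_mem ℛ (hh k),
      add_sub_cancel_right]
    exact Submodule.mul_mem_mul (SetLike.coe_mem _) (Submodule.mem_span_singleton_self _)
  · refine iSup_le fun k => Submodule.mul_le.mpr fun a ha b hb => ?_
    obtain ⟨c, rfl⟩ := Submodule.mem_span_singleton.mp hb
    refine ⟨Ideal.mul_mem_left _ _ (Submodule.smul_of_tower_mem _ c
      (Ideal.subset_span ⟨k, rfl⟩)), ?_⟩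
    simpa using SetLike.GradedMul.mul_mem ha ((ℛ (deg k)).smul_mem c (hh k))

lemma idealPiece_span_add {h : κ → R} {deg : κ → ι} (hh : ∀ k, h k ∈ ℛ (deg k)) {d e : ι}
    (hmul : ∀ k, ℛ (d - deg k + e) = ℛ e * ℛ (d - deg k)) :
    idealPiece ℛ (Ideal.span (Set.range h)) (d + e) =
      ℛ e * idealPiece ℛ (Ideal.span (Set.range h)) d := by
  simp only [idealPiece_span ℛ hh, Submodule.mul_iSup, add_sub_right_comm, hmul, mul_assoc]

lemma isHausdorff_span_singleton {x : R} {e : ι} (hx : x ∈ ℛ e)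
    (hbdd : ∀ d, ∃ n : ℕ, ℛ (d - n • e) = ⊥) : IsHausdorff (Ideal.span {x}) R where
  haus' z hz := by
    refine (decompose ℛ).injective ?_
    rw [decompose_zero]
    ext d
    obtain ⟨n, hn⟩ := hbdd d
    have hzn := hz n
    rw [SModEq.zero, smul_eq_mul, Ideal.mul_top, Ideal.span_singleton_pow,
      Ideal.mem_span_singleton'] at hzn
    obtain ⟨u, rfl⟩ := hzn
    have hu : (decompose ℛ u (d - n • e) : R) = 0 := by
      rw [← Submodule.mem_bot K, ← hn]
      exact SetLike.coe_mem _
    rw [← sub_add_cancel d (n • e),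
      coe_decompose_mul_add_of_right_mem ℛ (SetLike.pow_mem_graded n hx), hu, zero_mul]
    rfl

end GradedIdeal

section Stabilization

variable {K R : Type*} [Field K] [CommRing R] [Algebra K R]

lemma finrank_span_singleton_mul {x : R} (hx : IsLeftRegular x) (P : Submodule K R) :
    finrank K ↥(Submodule.span K {x} * P) = finrank K P := by
  rw [Submodule.span_singleton_mul]
  exact (Submodule.equivMapOfInjective (DistribSMul.toLinearMap K R x) hx P).finrank_eq.symm

theorem finrank_eq_of_succ_eq_mul {P : ℕ → Submodule K R} {L : Submodule K R} {x : R} (hxL : x ∈ L)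
    (hx : IsLeftRegular x) (hP : ∀ a, P (a + 1) = L * P a) [Module.Finite K (P 1)]
    (h01 : finrank K (P 0) = finrank K (P 1)) (a : ℕ) : finrank K (P 0) = finrank K (P a) := by
  have hPx : ∀ a, P (a + 1) = Submodule.span K {x} * P a := by
    intro a
    induction a with
    | zero =>
      symm
      refine Submodule.eq_of_le_of_finrank_eq ?_ ((finrank_span_singleton_mul hx _).trans h01)
      rw [zero_add, hP 0]
      exact mul_le_mul_left ((Submodule.span_singleton_le_iff_mem _ _).mpr hxL) _
    | succ a ih =>
      calc P (a + 1 + 1) = L * (Submodule.span K {x} * P a) := by rw [hP, ih]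
        _ = Submodule.span K {x} * (L * P a) := mul_left_comm _ _ _
        _ = Submodule.span K {x} * P (a + 1) := by rw [hP]
  induction a with
  | zero => rfl
  | succ a ih => rw [ih, hPx, finrank_span_singleton_mul hx]

end Stabilization

lemma RegPair.isLeftRegular_fst {A : Type*} [CommRing A] {x y : A} (h : RegPair x y) :
    IsLeftRegular x :=
  isLeftRegular_iff_right_eq_zero_of_mul.mpr h.1

lemma RegPair.isLeftRegular_snd {A : Type*} [CommRing A] {x y : A} (h : RegPair x y)
    [IsHausdorff (Ideal.span {x}) A] : IsLeftRegular y := by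
  refine isLeftRegular_iff_right_eq_zero_of_mul.mpr fun z hz => ?_
  have hdvd : ∀ n : ℕ, ∃ u, x ^ n * u = z ∧ y * u = 0 := by
    intro n
    induction n with
    | zero => exact ⟨z, by rw [pow_zero, one_mul], hz⟩
    | succ n ih =>
      obtain ⟨u, rfl, hu⟩ := ih
      obtain ⟨v, rfl⟩ := Ideal.mem_span_singleton.mp (h.2 u (hu ▸ Ideal.zero_mem _))
      refine ⟨v, by ring, h.1 _ ?_⟩
      rwa [mul_left_comm] at hu
  refine IsHausdorff.haus ‹_› z fun n => ?_
  obtain ⟨u, rfl, -⟩ := hdvd n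
  rw [SModEq.zero, smul_eq_mul, Ideal.mul_top, Ideal.span_singleton_pow]
  exact Ideal.mul_mem_right _ _ (Ideal.mem_span_singleton_self _)

section Weighted

variable {σ M N R : Type*} [AddCancelCommMonoid M] [AddCommMonoid N] [CommSemiring R] {w : σ → M}

/- By `hc` a monomial of degree `c + e` contains a variable not killed by `π`; it has degree `e` and
can be split off. -/
lemma weightedHomogeneousSubmodule_add_eq_mul {π : M →+ N} {c e : M}
    (hπ : ∀ v, π (w v) ≠ 0 → w v = e) (hc : π (c + e) ≠ 0) :
    weightedHomogeneousSubmodule R w (c + e) =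
      weightedHomogeneousSubmodule R w e * weightedHomogeneousSubmodule R w c := by
  refine le_antisymm (fun F hF => ?_)
    ((weightedHomogeneousSubmodule_mul w e c).trans_eq (by rw [add_comm]))
  rw [F.as_sum]
  refine Submodule.sum_mem _ fun s hs => ?_
  have hs' : Finsupp.weight w s = c + e := hF (mem_support_iff.mp hs)
  obtain ⟨v, hsv, hv⟩ : ∃ v, s v ≠ 0 ∧ π (w v) ≠ 0 := by
    by_contra! hzero
    refine hc ?_
    rw [← hs', Finsupp.weight_apply, Finsupp.sum, map_sum]
    exact Finset.sum_eq_zero fun v hv => by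
      rw [map_nsmul, hzero v (Finsupp.mem_support_iff.mp hv), smul_zero]
  obtain ⟨t, rfl⟩ := exists_add_of_le (Finsupp.single_le_iff.mpr (Nat.one_le_iff_ne_zero.mpr hsv))
  rw [monomial_single_add, pow_one]
  refine Submodule.mul_mem_mul (hπ v hv ▸ isWeightedHomogeneous_X R w v)
    (isWeightedHomogeneous_monomial w t _ ?_)
  rw [map_add, Finsupp.weight_single, one_smul, hπ v hv, add_comm] at hs'
  exact add_right_cancel hs'

end Weighted

variable {K : Type} [Field K] {m n : ℕ}

lemma weight_biwt (s : (Fin (m + 1) ⊕ Fin (n + 1)) →₀ ℕ) :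
    Finsupp.weight (biwt m n) s = (((∑ i, s (.inl i) : ℕ) : ℤ), ((∑ j, s (.inr j) : ℕ) : ℤ)) := by
  simp [Finsupp.weight_eq_sum, biwt, Fintype.sum_sum_type, Prod.ext_iff, Prod.fst_sum,
    Prod.snd_sum]

instance finite_weightedHomogeneousSubmodule_biwt (d : ℤ × ℤ) :
    Module.Finite K (weightedHomogeneousSubmodule K (biwt m n) d) := by
  have hfin : {s : (Fin (m + 1) ⊕ Fin (n + 1)) →₀ ℕ | Finsupp.weight (biwt m n) s = d}.Finite := by
    refine (Finsupp.finite_of_degree_le (d.1 + d.2).toNat).subset ?_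
    rintro s rfl
    simp only [Set.mem_ofPred_eq, weight_biwt, Finsupp.degree_eq_sum, Fintype.sum_sum_type]
    omega
  have := hfin.to_subtype
  rw [weightedHomogeneousSubmodule_eq_finsupp_supported (R := K)]
  exact Module.Finite.of_basis (basisRestrictSupport K {s | Finsupp.weight (biwt m n) s = d})

variable {I : Ideal (BiRing K m n)}

instance finite_degPieceB_s8 (d : ℤ × ℤ) : Module.Finite K (degPieceB K I d) :=
  Module.Finite.map _ _

lemma degPieceB_eq_bot_of_fst_neg {d : ℤ × ℤ} (hd : d.1 < 0) : degPieceB K I d = ⊥ := by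
  have hbot : weightedHomogeneousSubmodule K (biwt m n) d = ⊥ := by
    refine (Submodule.eq_bot_iff _).mpr fun F hF => hF.eq_zero_of_no_monomials fun s hs => ?_
    have hfst := congrArg Prod.fst (hs.symm.trans (weight_biwt s))
    omega
  rw [degPieceB, hbot, Submodule.map_bot]

lemma degPieceB_add_eq_mul {π : ℤ × ℤ →+ ℤ} {c e : ℤ × ℤ}
    (hπ : ∀ v, π (biwt m n v) ≠ 0 → biwt m n v = e) (hc : π (c + e) ≠ 0) :
    degPieceB K I (c + e) = degPieceB K I e * degPieceB K I c := by
  simp only [degPieceB, weightedHomogeneousSubmodule_add_eq_mul hπ hc, Submodule.map_mul]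

lemma X_mem_degPieceB (v : Fin (m + 1) ⊕ Fin (n + 1)) :
    Ideal.Quotient.mk I (X v) ∈ degPieceB K I (biwt m n v) :=
  ⟨X v, isWeightedHomogeneous_X K (biwt m n) v, rfl⟩

lemma y0B_isLeftRegular (hI : I.IsHomogeneous (weightedHomogeneousSubmodule K (biwt m n)))
    (hreg : RegPair (x0B K I) (y0B K I)) : IsLeftRegular (y0B K I) := by
  have : GradedAlgebra (degPieceB K I) := quotientGradedAlgebra _ hI
  have : IsHausdorff (Ideal.span {x0B K I}) (BiRing K m n ⧸ I) := by
    refine isHausdorff_span_singleton (degPieceB K I) (X_mem_degPieceB (.inl 0)) fun d =>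
      ⟨(d.1 + 1).toNat, degPieceB_eq_bot_of_fst_neg ?_⟩
    simp [biwt]
  exact hreg.isLeftRegular_snd

theorem HFIdealB_eq_add_nsmul (hI : I.IsHomogeneous (weightedHomogeneousSubmodule K (biwt m n)))
    {κ : Type*} {h : κ → BiRing K m n ⧸ I} {deg : κ → ℤ × ℤ}
    (hh : ∀ k, h k ∈ degPieceB K I (deg k)) {π : ℤ × ℤ →+ ℤ} {e : ℤ × ℤ} (he : 0 < π e)
    (hπ : ∀ v, π (biwt m n v) ≠ 0 → biwt m n v = e) {x : BiRing K m n ⧸ I}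
    (hxe : x ∈ degPieceB K I e) (hx : IsLeftRegular x) {d : ℤ × ℤ} (hd : ∀ k, π (deg k) ≤ π d)
    (heq : HFIdealB K I (Ideal.span (Set.range h)) d =
      HFIdealB K I (Ideal.span (Set.range h)) (d + e)) (a : ℕ) :
    HFIdealB K I (Ideal.span (Set.range h)) d =
      HFIdealB K I (Ideal.span (Set.range h)) (d + a • e) := by
  have : GradedAlgebra (degPieceB K I) := quotientGradedAlgebra _ hI
  let P (a : ℕ) := idealPiece (degPieceB K I) (Ideal.span (Set.range h)) (d + a • e)
  have hP (a : ℕ) : P (a + 1) = degPieceB K I e * P a := by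
    rw [← idealPiece_span_add _ hh, add_assoc, ← succ_nsmul]
    refine fun k => degPieceB_add_eq_mul hπ (ne_of_gt ?_)
    rw [add_sub_right_comm, map_add, map_add, map_nsmul, map_sub]
    exact add_pos_of_nonneg_of_pos
      (add_nonneg (sub_nonneg.mpr (hd k)) (nsmul_nonneg he.le a)) he
  have : Module.Finite K (P 1) := Submodule.finiteDimensional_of_le inf_le_right
  have hP0 : P 0 = idealPiece (degPieceB K I) (Ideal.span (Set.range h)) d := by
    simp only [P, zero_nsmul, add_zero]
  have hP1 : P 1 = idealPiece (degPieceB K I) (Ideal.span (Set.range h)) (d + e) := by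
    simp only [P, one_nsmul]
  have hfin := finrank_eq_of_succ_eq_mul hxe hx hP (by rw [hP0, hP1]; exact heq) a
  rwa [hP0] at hfin

lemma isHomogeneous_vIdealB (𝕏 : Finset (BiPt K m n)) :
    (vIdealB K 𝕏).IsHomogeneous (weightedHomogeneousSubmodule K (biwt m n)) :=
  Ideal.homogeneous_span _ _ fun _ hF => hF.1

end MultiProjPoints

open MultiProjPoints in
theorem statement_8_general {K : Type} [Field K] {m n : ℕ} {I : Ideal (BiRing K m n)}
    (hI : I.IsHomogeneous (weightedHomogeneousSubmodule K (biwt m n)))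
    (hreg : RegPair (x0B K I) (y0B K I)) {κ : Type*} {h : κ → BiRing K m n ⧸ I}
    {deg : κ → ℤ × ℤ} (hh : ∀ k, h k ∈ degPieceB K I (deg k)) (i j : ℤ) :
    ((∀ k, (deg k).1 ≤ i) →
      HFIdealB K I (Ideal.span (Set.range h)) (i, j) =
        HFIdealB K I (Ideal.span (Set.range h)) (i + 1, j) →
      ∀ a : ℕ, HFIdealB K I (Ideal.span (Set.range h)) (i, j) =
        HFIdealB K I (Ideal.span (Set.range h)) (i + a, j)) ∧
    ((∀ k, (deg k).2 ≤ j) →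
      HFIdealB K I (Ideal.span (Set.range h)) (i, j) =
        HFIdealB K I (Ideal.span (Set.range h)) (i, j + 1) →
      ∀ a : ℕ, HFIdealB K I (Ideal.span (Set.range h)) (i, j) =
        HFIdealB K I (Ideal.span (Set.range h)) (i, j + a)) := by
  refine ⟨fun hi heq a => ?_, fun hj heq a => ?_⟩
  · simpa using HFIdealB_eq_add_nsmul hI hh (π := .fst ℤ ℤ) (e := (1, 0)) one_pos
      (by rintro (v | v) hv <;> simp_all [biwt]) (X_mem_degPieceB (.inl 0))
      hreg.isLeftRegular_fst (d := (i, j)) hi (by simpa using heq) a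
  · simpa using HFIdealB_eq_add_nsmul hI hh (π := .snd ℤ ℤ) (e := (0, 1)) one_pos
      (by rintro (v | v) hv <;> simp_all [biwt]) (X_mem_degPieceB (.inr 0))
      (y0B_isLeftRegular hI hreg) (d := (i, j)) hj (by simpa using heq) a

open MultiProjPoints in
/-- Lemma 3.5: stabilization of the Hilbert function of the
Kähler different `ϑ_𝕏` beyond the maximal degrees `i_max`, `j_max` of a
bihomogeneous minimal system of generators of `ϑ_𝕏`. -/
theorem statement_8 (K : Type) [Field K] [CharZero K] [DecidableEq K]
    (m n : ℕ) (𝕏 : Finset (BiPt K m n)) (hgood : GoodConfig K 𝕏)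
    (hne : 𝕏.Nonempty) (hACM : ACMxy K 𝕏)
    -- a bihomogeneous system of generators of `I_𝕏`
    (r : ℕ) (H : Fin r → BiRing K m n) (hHhom : ∀ k, ∃ d, IsBihom K (H k) d)
    (hHgen : Ideal.span (Set.range H) = vIdealB K 𝕏)
    -- a bihomogeneous minimal system of generators `h_1,…,h_t` of `ϑ_𝕏`
    (t : ℕ) (h : Fin t → BiRing K m n ⧸ vIdealB K 𝕏) (dk : Fin t → ℕ × ℕ)
    (hhom : ∀ k, ∃ f : BiRing K m n,
      IsBihom K f (((dk k).1 : ℤ), ((dk k).2 : ℤ)) ∧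
      Ideal.Quotient.mk (vIdealB K 𝕏) f = h k)
    (hgen : Ideal.span (Set.range h) = kdiffB K (vIdealB K 𝕏) H)
    (hmin : ∀ k, h k ∉ Ideal.span (Set.range h \ {h k}))
    (imax jmax : ℕ) (himax : imax = Finset.univ.sup fun k => (dk k).1)
    (hjmax : jmax = Finset.univ.sup fun k => (dk k).2) :
    ∀ i j : ℕ,
      (imax ≤ i →
        HFIdealB K (vIdealB K 𝕏) (kdiffB K (vIdealB K 𝕏) H) ((i : ℤ), (j : ℤ)) =
          HFIdealB K (vIdealB K 𝕏) (kdiffB K (vIdealB K 𝕏) H) ((i : ℤ) + 1, (j : ℤ)) →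
        HFIdealB K (vIdealB K 𝕏) (kdiffB K (vIdealB K 𝕏) H) ((i : ℤ), (j : ℤ)) =
          HFIdealB K (vIdealB K 𝕏) (kdiffB K (vIdealB K 𝕏) H) ((i : ℤ) + 2, (j : ℤ))) ∧
      (jmax ≤ j →
        HFIdealB K (vIdealB K 𝕏) (kdiffB K (vIdealB K 𝕏) H) ((i : ℤ), (j : ℤ)) =
          HFIdealB K (vIdealB K 𝕏) (kdiffB K (vIdealB K 𝕏) H) ((i : ℤ), (j : ℤ) + 1) →
        HFIdealB K (vIdealB K 𝕏) (kdiffB K (vIdealB K 𝕏) H) ((i : ℤ), (j : ℤ)) =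
          HFIdealB K (vIdealB K 𝕏) (kdiffB K (vIdealB K 𝕏) H) ((i : ℤ), (j : ℤ) + 2)) := by
  have key := statement_8_general (isHomogeneous_vIdealB 𝕏) hACM hhom
  simp only [himax, hjmax, ← hgen, Finset.sup_le_iff]
  exact fun i j =>
    ⟨fun hi heq => (key i j).1 (fun k => Int.ofNat_le.mpr (hi k (Finset.mem_univ k))) heq 2,
      fun hj heq => (key i j).2 (fun k => Int.ofNat_le.mpr (hj k (Finset.mem_univ k))) heq 2⟩
end
end
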